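/- Let T be a theory of unital C*-algebras (in the continuous logic language of C*-algebras) and let P be a T-function assigning to each model A of T a predicate P^A : A_1^n → [0,1] such that every P^A is uniformly continuous with a modulus of uniform continuity independent of the model A. Then P is realized (i.e., is the interpretation of a T-formula) if and only if: (1) whenever A, B are models of T and Φ : A → B is an isomorphism, then P^B ∘ Φ = P^A; and (2) whenever (A_i)_{i∈I} is a family of models of T and U is an ultrafilter on I, then, writing A = ∏_U A_i for the C*-algebra ultraproduct, P^A = lim_U P^{A_i}. -/

import Mathlib

/-!
A realized function satisfies both conditions by Łoś's theorem, an isomorphism being a trivial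
ultraproduct (`tendsto_of_realized`, `eq_of_starAlgEquiv`).

For the converse, `P A a` is shown to depend only on the type of `a` in `A`, that is, on the function
`φ ↦ φ.interp A a` (`eq_of_interp_eq`). The types realized in models of `T` form a compact space, since
the limit of types along an ultrafilter is realized in the ultraproduct of their realizations; for
the same reason `P`, commuting with ultraproducts, is a continuous function on this space. Formulas
give a point-separating subalgebra of the continuous functions, so by Stone–Weierstrass `P` is
a uniform limit of formulas (`realized_of_commutes`).

That `P` depends on types only follows from the Keisler–Shelah theorem: if `a` in `A` and `b` in `B`
have the same type, there are an index set `L`, an ultrafilter `D` on `L` and an isomorphism of the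
ultrapowers `∏_D A ≃ ∏_D B` which maps the diagonal image of `a` to that of `b`
(`exists_ultrapower_equiv`). The proof follows Shelah's and uses no hypothesis on cardinal
arithmetic. Let `Y` be a set at least as large as `A`, `B` and the set of formulas. There are a set
`L` of size at most `2 ^ #Y` and a family of `2 ^ 2 ^ #Y` functions `L → Y` any `#Y` of which take
prescribed values simultaneously (`indep_spec`). A transfinite back-and-forth of length
at most `2 ^ 2 ^ #Y` (`Compat.exists_total`) builds a set `R` of pairs `(f, g)` of families in the unit
balls of `A` and `B`, in which each family in either ball occurs, such that for all finite tuples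
from `R` and finitely many formulas there is an index at which the values of the formulas at the
two halves of the tuple agree up to `1`. In a single step a family `f` is given, and `g` is read
off from an unused member of the independent family, which by the lemma `guess` may be assumed
to guess a correct partner of `f` for each of the conditions to be preserved. Any ultrafilter
containing all these agreement sets makes `R` induce an isomorphism of the ultrapowers.
-/

open scoped TensorProduct
open Filter Topology Function

noncomputable section

/-- A family of elements of C*-algebras is (uniformly norm-)bounded. -/
def Bdd {I : Type} {A : I → Type} [∀ i, CStarAlgebra (A i)] (f : ∀ i, A i) : Prop :=
  ∃ M : ℝ, ∀ i, ‖f i‖ ≤ M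

/-- `π : (∀ i, A i) → B` realizes `B` as the C*-algebra ultraproduct `∏_U A_i`, i.e. as
the quotient of the ℓ∞-product of the `A i` by the ideal of bounded families whose norms
tend to `0` along `U`:  `π` is a unital *-homomorphism on bounded families, every element
of `B` lifts to a bounded family (with control of norms), and the norm of `π f` is the
`U`-limit of the norms `‖f i‖`.  This data determines `B` uniquely up to isometric
*-isomorphism. -/
structure IsCStarUltraproduct {I : Type} (U : Ultrafilter I) (A : I → Type)
    [∀ i, CStarAlgebra (A i)] (B : Type) [CStarAlgebra B]
    (π : (∀ i, A i) → B) : Prop where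
  map_one : π 1 = 1
  map_add : ∀ f g, Bdd f → Bdd g → π (f + g) = π f + π g
  map_mul : ∀ f g, Bdd f → Bdd g → π (f * g) = π f * π g
  map_star : ∀ f, Bdd f → π (star f) = star (π f)
  map_smul : ∀ (c : ℂ) f, Bdd f → π (c • f) = c • π f
  norm_eq : ∀ f, Bdd f → Tendsto (fun i => ‖f i‖) (U : Filter I) (nhds ‖π f‖)
  surj : ∀ b : B, ∃ f, (∀ i, ‖f i‖ ≤ ‖b‖) ∧ π f = b

/-- *-polynomial terms in `n` variables over `ℂ`: the terms of the continuous-logic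
language of (unital) C*-algebras. -/
inductive CTerm : ℕ → Type
  | var {n : ℕ} : Fin n → CTerm n
  | one {n : ℕ} : CTerm n
  | add {n : ℕ} : CTerm n → CTerm n → CTerm n
  | mul {n : ℕ} : CTerm n → CTerm n → CTerm n
  | star {n : ℕ} : CTerm n → CTerm n
  | smul {n : ℕ} : ℂ → CTerm n → CTerm n

/-- Evaluation of a *-polynomial term in a C*-algebra. -/
def CTerm.eval {A : Type} [CStarAlgebra A] : ∀ {n : ℕ}, CTerm n → (Fin n → A) → A
  | _, CTerm.var i, a => a i
  | _, CTerm.one, _ => 1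
  | _, CTerm.add s t, a => CTerm.eval s a + CTerm.eval t a
  | _, CTerm.mul s t, a => CTerm.eval s a * CTerm.eval t a
  | _, CTerm.star t, a => Star.star (CTerm.eval t a)
  | _, CTerm.smul c t, a => c • CTerm.eval t a

/-- Formulas of the continuous-logic language of (unital) C*-algebras in `n` free
variables (all variables ranging over the closed unit ball): atomic formulas `‖t‖` for
*-polynomial terms `t`, closed under continuous combinations and the quantifiers
`sup` and `inf` over the unit ball. -/
inductive Formula : ℕ → Type
  | atom {n : ℕ} : CTerm n → Formula n
  | comb {n k : ℕ} (u : (Fin k → ℝ) → ℝ) (hu : Continuous u)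
      (phis : Fin k → Formula n) : Formula n
  | sup {n : ℕ} : Formula (n + 1) → Formula n
  | inf {n : ℕ} : Formula (n + 1) → Formula n

/-- The interpretation of a formula in a (unital) C*-algebra, the quantified variables
ranging over the closed unit ball. -/
def Formula.interp (A : Type) [CStarAlgebra A] :
    ∀ {n : ℕ}, Formula n → (Fin n → A) → ℝ
  | _, Formula.atom t, a => ‖t.eval a‖
  | _, Formula.comb u _ phis, a => u fun j => (phis j).interp A a
  | _, Formula.sup phi, a => ⨆ b : {x : A // ‖x‖ ≤ 1}, phi.interp A (Fin.snoc a b.1)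
  | _, Formula.inf phi, a => ⨅ b : {x : A // ‖x‖ ≤ 1}, phi.interp A (Fin.snoc a b.1)

/-- A sentence is a formula with no free variables. -/
abbrev Sentence := Formula 0

/-- A theory of (unital) C*-algebras: a set of sentences, each imposed as the condition
`σ = 0`. -/
abbrev CStarTheory := Set Sentence

/-- `A` is a model of the theory `T`. -/
def Models (A : Type) [CStarAlgebra A] (T : CStarTheory) : Prop :=
  ∀ σ ∈ T, σ.interp A finZeroElim = 0

/-! ### Syntax: renaming variables -/

/-- The term obtained by replacing each variable `i` by the variable `s i`. -/
def CTerm.rename : ∀ {m n : ℕ}, (Fin m → Fin n) → CTerm m → CTerm n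
  | _, _, s, CTerm.var i => CTerm.var (s i)
  | _, _, _, CTerm.one => CTerm.one
  | _, _, s, CTerm.add t u => CTerm.add (t.rename s) (u.rename s)
  | _, _, s, CTerm.mul t u => CTerm.mul (t.rename s) (u.rename s)
  | _, _, s, CTerm.star t => CTerm.star (t.rename s)
  | _, _, s, CTerm.smul c t => CTerm.smul c (t.rename s)

theorem CTerm.eval_rename {A : Type} [CStarAlgebra A] {m n : ℕ} (s : Fin m → Fin n)
    (t : CTerm m) (a : Fin n → A) : (t.rename s).eval a = t.eval (a ∘ s) := by
  induction t with
  | var i => simp [CTerm.rename, CTerm.eval]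
  | one => simp [CTerm.rename, CTerm.eval]
  | add t u iht ihu => simp [CTerm.rename, CTerm.eval, iht, ihu]
  | mul t u iht ihu => simp [CTerm.rename, CTerm.eval, iht, ihu]
  | star t ih => simp [CTerm.rename, CTerm.eval, ih]
  | smul c t ih => simp [CTerm.rename, CTerm.eval, ih]

/-- The renaming `s`, extended by fixing one additional last (bound) variable. -/
def liftRename {m n : ℕ} (s : Fin m → Fin n) : Fin (m + 1) → Fin (n + 1) :=
  Fin.snoc (fun i => (s i).castSucc) (Fin.last n)

theorem snoc_comp_liftRename {X : Type} {m n : ℕ} (s : Fin m → Fin n) (a : Fin n → X) (b : X) :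
    (Fin.snoc a b : Fin (n + 1) → X) ∘ liftRename s = Fin.snoc (a ∘ s) b := by
  funext i
  refine Fin.lastCases ?_ (fun j => ?_) i
  · simp [liftRename]
  · simp [liftRename]

/-- The formula obtained by replacing each free variable `i` by the variable `s i`. -/
def Formula.rename : ∀ {m n : ℕ}, (Fin m → Fin n) → Formula m → Formula n
  | _, _, s, Formula.atom t => Formula.atom (t.rename s)
  | _, _, s, Formula.comb u hu phis => Formula.comb u hu fun j => (phis j).rename s
  | _, _, s, Formula.sup phi => Formula.sup (phi.rename (liftRename s))
  | _, _, s, Formula.inf phi => Formula.inf (phi.rename (liftRename s))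

theorem Formula.interp_rename {A : Type} [CStarAlgebra A] {m n : ℕ} (s : Fin m → Fin n)
    (φ : Formula m) (a : Fin n → A) : (φ.rename s).interp A a = φ.interp A (a ∘ s) := by
  induction φ generalizing n with
  | atom t => simp [Formula.rename, Formula.interp, CTerm.eval_rename]
  | comb u hu phis ih => simp [Formula.rename, Formula.interp, ih]
  | sup phi ih => simp [Formula.rename, Formula.interp, ih, snoc_comp_liftRename]
  | inf phi ih => simp [Formula.rename, Formula.interp, ih, snoc_comp_liftRename]

/-! ### Uniform bounds -/

instance ballNonempty (A : Type) [CStarAlgebra A] : Nonempty {x : A // ‖x‖ ≤ 1} :=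
  ⟨⟨0, by simp⟩⟩

/-- Note that `1` has norm at most `1` even in the zero algebra. -/
theorem norm_one_le' (A : Type) [CStarAlgebra A] : ‖(1 : A)‖ ≤ 1 := by
  rcases subsingleton_or_nontrivial A with h | h
  · rw [Subsingleton.elim (1 : A) 0]; simp
  · exact (CStarRing.norm_one (E := A)).le

theorem CTerm.exists_bound {n : ℕ} (t : CTerm n) : ∃ M : ℝ, 0 ≤ M ∧
    ∀ (A : Type) [CStarAlgebra A] (a : Fin n → A), (∀ k, ‖a k‖ ≤ 1) → ‖t.eval a‖ ≤ M := by
  induction t with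
  | var i => exact ⟨1, zero_le_one, fun A _ a ha => by simpa only [CTerm.eval] using ha i⟩
  | one => exact ⟨1, zero_le_one, fun A _ a ha => by simpa only [CTerm.eval] using norm_one_le' A⟩
  | add t u iht ihu =>
    obtain ⟨M, hM0, hM⟩ := iht
    obtain ⟨N, hN0, hN⟩ := ihu
    exact ⟨M + N, by positivity, fun A _ a ha => by
      rw [CTerm.eval]
      exact (norm_add_le _ _).trans (add_le_add (hM A a ha) (hN A a ha))⟩
  | mul t u iht ihu =>
    obtain ⟨M, hM0, hM⟩ := iht
    obtain ⟨N, hN0, hN⟩ := ihu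
    exact ⟨M * N, by positivity, fun A _ a ha => by
      rw [CTerm.eval]
      exact (norm_mul_le _ _).trans (mul_le_mul (hM A a ha) (hN A a ha) (norm_nonneg _) hM0)⟩
  | star t ih =>
    obtain ⟨M, hM0, hM⟩ := ih
    exact ⟨M, hM0, fun A _ a ha => by simpa [CTerm.eval] using hM A a ha⟩
  | smul c t ih =>
    obtain ⟨M, hM0, hM⟩ := ih
    exact ⟨‖c‖ * M, by positivity, fun A _ a ha => by
      rw [CTerm.eval, norm_smul]
      exact mul_le_mul_of_nonneg_left (hM A a ha) (norm_nonneg _)⟩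

theorem norm_snoc_le {A : Type} [CStarAlgebra A] {n : ℕ} {a : Fin n → A} (ha : ∀ k, ‖a k‖ ≤ 1)
    {b : A} (hb : ‖b‖ ≤ 1) : ∀ k, ‖(Fin.snoc a b : Fin (n + 1) → A) k‖ ≤ 1 := by
  intro k
  refine Fin.lastCases ?_ (fun j => ?_) k
  · simpa using hb
  · simpa using ha j

/-- A formula is bounded on unit balls, uniformly over all C*-algebras. In particular the suprema
and infima in `Formula.interp` are genuine. -/
theorem Formula.exists_bound {n : ℕ} (φ : Formula n) : ∃ M : ℝ,
    ∀ (A : Type) [CStarAlgebra A] (a : Fin n → A), (∀ k, ‖a k‖ ≤ 1) → |φ.interp A a| ≤ M := by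
  induction φ with
  | atom t =>
    obtain ⟨M, -, hM⟩ := t.exists_bound
    exact ⟨M, fun A _ a ha => by simpa [Formula.interp] using hM A a ha⟩
  | @comb n k u hu phis ih =>
    choose M hM using ih
    have hc : IsCompact (Set.pi Set.univ fun j => Set.Icc (-(M j)) (M j)) :=
      isCompact_univ_pi fun j => isCompact_Icc
    obtain ⟨C, hC⟩ := hc.exists_bound_of_continuousOn hu.continuousOn
    refine ⟨C, fun A _ a ha => hC _ ?_⟩
    intro j _
    exact abs_le.1 (hM j A a ha)
  | sup phi ih =>
    obtain ⟨M, hM⟩ := ih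
    refine ⟨M, fun A _ a ha => ?_⟩
    have h : ∀ b : {x : A // ‖x‖ ≤ 1}, |phi.interp A (Fin.snoc a b.1)| ≤ M :=
      fun b => hM A _ (norm_snoc_le ha b.2)
    have hb : BddAbove (Set.range fun b : {x : A // ‖x‖ ≤ 1} => phi.interp A (Fin.snoc a b.1)) :=
      ⟨M, by rintro _ ⟨b, rfl⟩; exact (abs_le.1 (h b)).2⟩
    rw [Formula.interp, abs_le]
    exact ⟨(abs_le.1 (h ⟨0, by simp⟩)).1.trans (le_ciSup hb ⟨0, by simp⟩),
      ciSup_le fun b => (abs_le.1 (h b)).2⟩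
  | inf phi ih =>
    obtain ⟨M, hM⟩ := ih
    refine ⟨M, fun A _ a ha => ?_⟩
    have h : ∀ b : {x : A // ‖x‖ ≤ 1}, |phi.interp A (Fin.snoc a b.1)| ≤ M :=
      fun b => hM A _ (norm_snoc_le ha b.2)
    have hb : BddBelow (Set.range fun b : {x : A // ‖x‖ ≤ 1} => phi.interp A (Fin.snoc a b.1)) :=
      ⟨-M, by rintro _ ⟨b, rfl⟩; exact (abs_le.1 (h b)).1⟩
    rw [Formula.interp, abs_le]
    exact ⟨le_ciInf fun b => (abs_le.1 (h b)).1,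
      (ciInf_le hb ⟨0, by simp⟩).trans (abs_le.1 (h ⟨0, by simp⟩)).2⟩

theorem Formula.bddAbove {n : ℕ} (φ : Formula (n + 1)) {A : Type} [CStarAlgebra A] {a : Fin n → A}
    (ha : ∀ k, ‖a k‖ ≤ 1) :
    BddAbove (Set.range fun b : {x : A // ‖x‖ ≤ 1} => φ.interp A (Fin.snoc a b.1)) := by
  obtain ⟨M, hM⟩ := φ.exists_bound
  exact ⟨M, by rintro _ ⟨b, rfl⟩; exact (abs_le.1 (hM A _ (norm_snoc_le ha b.2))).2⟩

theorem Formula.bddBelow {n : ℕ} (φ : Formula (n + 1)) {A : Type} [CStarAlgebra A] {a : Fin n → A}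
    (ha : ∀ k, ‖a k‖ ≤ 1) :
    BddBelow (Set.range fun b : {x : A // ‖x‖ ≤ 1} => φ.interp A (Fin.snoc a b.1)) := by
  obtain ⟨M, hM⟩ := φ.exists_bound
  exact ⟨-M, by rintro _ ⟨b, rfl⟩; exact (abs_le.1 (hM A _ (norm_snoc_le ha b.2))).1⟩

/-! ### Łoś's theorem -/

theorem snoc_family {I : Type} {A : I → Type} {n : ℕ} (f : Fin n → ∀ i, A i) (g : ∀ i, A i)
    (i : I) : (fun k => (Fin.snoc f g : Fin (n + 1) → ∀ i, A i) k i) =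
      Fin.snoc (fun k => f k i) (g i) := by
  funext k
  refine Fin.lastCases ?_ (fun j => ?_) k <;> simp

theorem snoc_map {X Y : Type} (π : X → Y) {n : ℕ} (f : Fin n → X) (g : X) :
    (fun k => π ((Fin.snoc f g : Fin (n + 1) → X) k)) = Fin.snoc (fun k => π (f k)) (π g) := by
  funext k
  refine Fin.lastCases ?_ (fun j => ?_) k <;> simp

section Los

variable {I : Type} {U : Ultrafilter I} {A : I → Type} [∀ i, CStarAlgebra (A i)]
  {B : Type} [CStarAlgebra B] {π : (∀ i, A i) → B}

theorem IsCStarUltraproduct.norm_le_one (h : IsCStarUltraproduct U A B π) {f : ∀ i, A i}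
    (hf : ∀ i, ‖f i‖ ≤ 1) : ‖π f‖ ≤ 1 :=
  le_of_tendsto (h.norm_eq f ⟨1, hf⟩) (Eventually.of_forall hf)

theorem IsCStarUltraproduct.eval (h : IsCStarUltraproduct U A B π) {n : ℕ} (t : CTerm n)
    (f : Fin n → ∀ i, A i) (hf : ∀ k i, ‖f k i‖ ≤ 1) :
    π (fun i => t.eval fun k => f k i) = t.eval fun k => π (f k) := by
  have hb : ∀ t : CTerm n, Bdd (fun i => t.eval fun k => f k i) := by
    intro t
    obtain ⟨M, -, hM⟩ := t.exists_bound
    exact ⟨M, fun i => hM (A i) _ fun k => hf k i⟩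
  induction t with
  | var k => simp only [CTerm.eval]
  | one => simp only [CTerm.eval]; exact h.map_one
  | add t u iht ihu =>
    simp only [CTerm.eval, ← iht, ← ihu]
    exact h.map_add _ _ (hb t) (hb u)
  | mul t u iht ihu =>
    simp only [CTerm.eval, ← iht, ← ihu]
    exact h.map_mul _ _ (hb t) (hb u)
  | star t ih =>
    simp only [CTerm.eval, ← ih]
    exact h.map_star _ (hb t)
  | smul c t ih =>
    simp only [CTerm.eval, ← ih]
    exact h.map_smul c _ (hb t)

theorem snoc_ball {n : ℕ} {f : Fin n → ∀ i, A i} (hf : ∀ k i, ‖f k i‖ ≤ 1) {g : ∀ i, A i}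
    (hg : ∀ i, ‖g i‖ ≤ 1) : ∀ k i, ‖(Fin.snoc f g : Fin (n + 1) → ∀ i, A i) k i‖ ≤ 1 := by
  intro k
  refine Fin.lastCases ?_ (fun j => ?_) k
  · simpa using hg
  · simpa using hf j

/-- Łoś's theorem: formulas commute with ultraproducts. -/
theorem IsCStarUltraproduct.los (h : IsCStarUltraproduct U A B π) {n : ℕ} (φ : Formula n)
    (f : Fin n → ∀ i, A i) (hf : ∀ k i, ‖f k i‖ ≤ 1) :
    Tendsto (fun i => φ.interp (A i) fun k => f k i) (U : Filter I)
      (𝓝 (φ.interp B fun k => π (f k))) := by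
  induction φ with
  | atom t =>
    obtain ⟨M, -, hM⟩ := t.exists_bound
    have := h.norm_eq (fun i => t.eval fun k => f k i) ⟨M, fun i => hM (A i) _ fun k => hf k i⟩
    rwa [h.eval t f hf] at this
  | comb u hu phis ih =>
    exact (hu.tendsto _).comp (tendsto_pi_nhds.2 fun j => ih j f hf)
  | @sup n phi ih =>
    have hπ : ∀ k, ‖π (f k)‖ ≤ 1 := fun k => h.norm_le_one (hf k)
    have key : ∀ g : ∀ i, A i, (∀ i, ‖g i‖ ≤ 1) →
        Tendsto (fun i => phi.interp (A i) (Fin.snoc (fun k => f k i) (g i))) (U : Filter I)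
          (𝓝 (phi.interp B (Fin.snoc (fun k => π (f k)) (π g)))) := fun g hg => by
      simpa only [snoc_family, snoc_map π] using ih (Fin.snoc f g) (snoc_ball hf hg)
    simp only [Formula.interp]
    refine tendsto_order.2 ⟨fun r hr => ?_, fun r hr => ?_⟩
    · obtain ⟨b, hb⟩ := exists_lt_of_lt_ciSup hr
      obtain ⟨g, hg, hgb⟩ := h.surj b.1
      have hg1 : ∀ i, ‖g i‖ ≤ 1 := fun i => (hg i).trans b.2
      have := key g hg1
      rw [hgb] at this
      filter_upwards [this.eventually (lt_mem_nhds hb)] with i hi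
      exact hi.trans_le (le_ciSup (phi.bddAbove fun k => hf k i) ⟨g i, hg1 i⟩)
    · obtain ⟨s, hs, hsr⟩ := exists_between hr
      -- a family of nearly optimal witnesses
      have : ∀ i, ∃ b : {x : A i // ‖x‖ ≤ 1},
          (⨆ b : {x : A i // ‖x‖ ≤ 1}, phi.interp (A i) (Fin.snoc (fun k => f k i) b.1)) - (r - s)
            < phi.interp (A i) (Fin.snoc (fun k => f k i) b.1) :=
        fun i => exists_lt_of_lt_ciSup (by linarith)
      choose g hg using this
      have h1 := key (fun i => (g i).1) fun i => (g i).2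
      have h2 := le_ciSup (phi.bddAbove hπ) ⟨π fun i => (g i).1, h.norm_le_one fun i => (g i).2⟩
      filter_upwards [h1.eventually (gt_mem_nhds (h2.trans_lt hs))] with i hi
      linarith [hg i]
  | @inf n phi ih =>
    have hπ : ∀ k, ‖π (f k)‖ ≤ 1 := fun k => h.norm_le_one (hf k)
    have key : ∀ g : ∀ i, A i, (∀ i, ‖g i‖ ≤ 1) →
        Tendsto (fun i => phi.interp (A i) (Fin.snoc (fun k => f k i) (g i))) (U : Filter I)
          (𝓝 (phi.interp B (Fin.snoc (fun k => π (f k)) (π g)))) := fun g hg => by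
      simpa only [snoc_family, snoc_map π] using ih (Fin.snoc f g) (snoc_ball hf hg)
    simp only [Formula.interp]
    refine tendsto_order.2 ⟨fun r hr => ?_, fun r hr => ?_⟩
    · obtain ⟨s, hrs, hs⟩ := exists_between hr
      have : ∀ i, ∃ b : {x : A i // ‖x‖ ≤ 1},
          phi.interp (A i) (Fin.snoc (fun k => f k i) b.1) <
          (⨅ b : {x : A i // ‖x‖ ≤ 1}, phi.interp (A i) (Fin.snoc (fun k => f k i) b.1)) + (s - r) :=
        fun i => exists_lt_of_ciInf_lt (by linarith)
      choose g hg using this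
      have h1 := key (fun i => (g i).1) fun i => (g i).2
      have h2 := ciInf_le (phi.bddBelow hπ) ⟨π fun i => (g i).1, h.norm_le_one fun i => (g i).2⟩
      filter_upwards [h1.eventually (lt_mem_nhds (hs.trans_le h2))] with i hi
      linarith [hg i]
    · obtain ⟨b, hb⟩ := exists_lt_of_ciInf_lt hr
      obtain ⟨g, hg, hgb⟩ := h.surj b.1
      have hg1 : ∀ i, ‖g i‖ ≤ 1 := fun i => (hg i).trans b.2
      have := key g hg1
      rw [hgb] at this
      filter_upwards [this.eventually (gt_mem_nhds hb)] with i hi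
      exact (ciInf_le (phi.bddBelow fun k => hf k i) ⟨g i, hg1 i⟩).trans_lt hi

theorem IsCStarUltraproduct.models (h : IsCStarUltraproduct U A B π) {T : CStarTheory}
    (hA : ∀ i, Models (A i) T) : Models B T := by
  intro σ hσ
  have h1 := h.los σ finZeroElim (fun k => k.elim0)
  have h2 : (fun i => σ.interp (A i) fun k => (finZeroElim : Fin 0 → ∀ i, A i) k i) = fun _ => 0 := by
    funext i
    rw [← hA i σ hσ]
    congr 1
    exact Subsingleton.elim _ _
  rw [h2] at h1
  rw [tendsto_nhds_unique tendsto_const_nhds h1]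
  congr 1
  exact Subsingleton.elim _ _

end Los

/-- An isomorphism exhibits its target as the (trivial) ultraproduct of a single algebra. -/
theorem isCStarUltraproduct_of_starAlgEquiv {A B : Type} [CStarAlgebra A] [CStarAlgebra B]
    (Φ : A ≃⋆ₐ[ℂ] B) : IsCStarUltraproduct (pure () : Ultrafilter Unit) (fun _ => A) B
      (fun f => Φ (f ())) where
  map_one := map_one Φ
  map_add f g _ _ := map_add Φ _ _
  map_mul f g _ _ := map_mul Φ _ _
  map_star f _ := map_star Φ _
  map_smul c f _ := map_smul Φ c _
  norm_eq f _ := by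
    have : ‖Φ (f ())‖ = ‖f ()‖ := StarAlgEquiv.norm_map Φ _
    rw [this]
    exact tendsto_pure_nhds (fun i : Unit => ‖f i‖) ()
  surj b := ⟨fun _ => Φ.symm b, fun _ => (StarAlgEquiv.norm_map Φ.symm _).le,
    by simp⟩

/-! ### Existence of ultraproducts -/

section Ultraproduct

variable {I : Type} (U : Ultrafilter I) (A : I → Type) [∀ i, CStarAlgebra (A i)]

/-- The *-algebra of bounded families. -/
def boundedFamilies : StarSubalgebra ℂ (∀ i, A i) where
  carrier := {f | Bdd f}
  mul_mem' := by
    rintro f g ⟨M, hM⟩ ⟨N, hN⟩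
    exact ⟨|M| * |N|, fun i => (norm_mul_le _ _).trans (mul_le_mul ((hM i).trans (le_abs_self _))
      ((hN i).trans (le_abs_self _)) (norm_nonneg _) (abs_nonneg _))⟩
  add_mem' := by
    rintro f g ⟨M, hM⟩ ⟨N, hN⟩
    exact ⟨M + N, fun i => (norm_add_le _ _).trans (add_le_add (hM i) (hN i))⟩
  algebraMap_mem' c := ⟨‖c‖, fun i => by
    rw [Pi.algebraMap_apply, Algebra.algebraMap_eq_smul_one, norm_smul]
    exact mul_le_of_le_one_right (norm_nonneg _) (norm_one_le' _)⟩
  star_mem' := by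
    rintro f ⟨M, hM⟩
    exact ⟨M, fun i => by simpa using hM i⟩

/-- The *-algebra of bounded families, as a type carrying the seminorm `lim_U ‖f i‖`. -/
def UFam (_ : Ultrafilter I) : Type := boundedFamilies A

namespace UFam

/-- A bounded family as an element of `UFam A U`. -/
def of (U : Ultrafilter I) {A : I → Type} [∀ i, CStarAlgebra (A i)] (f : ∀ i, A i) (hf : Bdd f) :
    UFam A U := ⟨f, hf⟩

instance : Ring (UFam A U) := inferInstanceAs (Ring (boundedFamilies A))
instance : StarRing (UFam A U) := inferInstanceAs (StarRing (boundedFamilies A))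
instance : Algebra ℂ (UFam A U) := inferInstanceAs (Algebra ℂ (boundedFamilies A))
instance : StarModule ℂ (UFam A U) := inferInstanceAs (StarModule ℂ (boundedFamilies A))

variable {U A}

theorem exists_lim (f : UFam A U) : ∃ r : ℝ, Tendsto (fun i => ‖f.1 i‖) U (𝓝 r) := by
  obtain ⟨M, hM⟩ := f.2
  obtain ⟨r, -, hr⟩ := (isCompact_Icc (a := (0 : ℝ)) (b := M)).ultrafilter_le_nhds
    (U.map fun i => ‖f.1 i‖) (le_principal_iff.2
      (Eventually.of_forall (fun i => ⟨norm_nonneg _, hM i⟩) :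
        ∀ᶠ i in (U : Filter I), ‖f.1 i‖ ∈ Set.Icc 0 M))
  exact ⟨r, hr⟩

variable (U A) in
/-- The seminorm `lim_U ‖f i‖`. -/
def seminorm : RingSeminorm (UFam A U) where
  toFun f := (exists_lim f).choose
  map_zero' := tendsto_nhds_unique (exists_lim (0 : UFam A U)).choose_spec
    (tendsto_const_nhds.congr fun i => (norm_zero (E := A i)).symm)
  add_le' f g := le_of_tendsto_of_tendsto' (exists_lim (f + g)).choose_spec
    ((exists_lim f).choose_spec.add (exists_lim g).choose_spec) fun i => norm_add_le (f.1 i) (g.1 i)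
  neg' f := tendsto_nhds_unique (exists_lim (-f)).choose_spec
    ((exists_lim f).choose_spec.congr fun i => (norm_neg (f.1 i)).symm)
  mul_le' f g := le_of_tendsto_of_tendsto' (exists_lim (f * g)).choose_spec
    ((exists_lim f).choose_spec.mul (exists_lim g).choose_spec) fun i => norm_mul_le (f.1 i) (g.1 i)

instance : SeminormedRing (UFam A U) := (seminorm U A).toSeminormedRing

theorem tendsto_norm (f : UFam A U) : Tendsto (fun i => ‖f.1 i‖) U (𝓝 ‖f‖) :=
  (exists_lim f).choose_spec

theorem norm_le {f : UFam A U} {C : ℝ} (h : ∀ i, ‖f.1 i‖ ≤ C) : ‖f‖ ≤ C :=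
  le_of_tendsto (tendsto_norm f) (Eventually.of_forall h)

instance : NormedAlgebra ℂ (UFam A U) where
  __ := (inferInstance : Algebra ℂ (UFam A U))
  norm_smul_le c f := (tendsto_nhds_unique (tendsto_norm (c • f))
    (((tendsto_norm f).const_mul ‖c‖).congr fun i => (norm_smul c (f.1 i)).symm)).le

theorem norm_star' (f : UFam A U) : ‖star f‖ = ‖f‖ :=
  tendsto_nhds_unique (tendsto_norm (star f))
    ((tendsto_norm f).congr fun i => (norm_star (f.1 i)).symm)

theorem continuous_star' : Continuous (star : UFam A U → UFam A U) :=
  (AddMonoidHomClass.isometry_of_norm (starAddEquiv : UFam A U ≃+ UFam A U)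
    norm_star').continuous

end UFam

/-- The ultraproduct `∏_U A i`: bounded families modulo those with `lim_U ‖f i‖ = 0`. -/
abbrev UProd : Type := SeparationQuotient (UFam A U)

namespace UProd

variable {U A}

/-- Every element of the ultraproduct lifts to a family whose entries are bounded by its norm. -/
theorem exists_lift (x : UProd U A) :
    ∃ f : UFam A U, (∀ i, ‖f.1 i‖ ≤ ‖x‖) ∧ SeparationQuotient.mk f = x := by
  obtain ⟨f, rfl⟩ := SeparationQuotient.surjective_mk x
  set r := ‖(SeparationQuotient.mk f : UProd U A)‖ with hr
  have hr0 : 0 ≤ r := norm_nonneg _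
  -- truncate the norm of each entry at `r`; this changes `f i` by norm `max 0 (‖f i‖ - r) → 0`
  have key : ∀ i, ∃ y : A i, ‖y‖ ≤ r ∧ ‖f.1 i - y‖ ≤ |‖f.1 i‖ - r| := by
    intro i
    by_cases h : ‖f.1 i‖ ≤ r
    · exact ⟨f.1 i, h, by simp⟩
    · have hpos : 0 < ‖f.1 i‖ := hr0.trans_lt (not_le.1 h)
      refine ⟨((r / ‖f.1 i‖ : ℝ) : ℂ) • f.1 i, ?_, ?_⟩
      · rw [norm_smul, Complex.norm_real, Real.norm_of_nonneg (by positivity)]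
        rw [div_mul_cancel₀ _ hpos.ne']
      · have : f.1 i - ((r / ‖f.1 i‖ : ℝ) : ℂ) • f.1 i = ((1 - r / ‖f.1 i‖ : ℝ) : ℂ) • f.1 i := by
          rw [Complex.ofReal_sub, sub_smul, Complex.ofReal_one, one_smul]
        rw [this, norm_smul, Complex.norm_real, Real.norm_eq_abs, ← abs_norm (f.1 i), ← abs_mul,
          abs_norm, sub_mul, one_mul, div_mul_cancel₀ _ hpos.ne']
  choose g hg hfg using key
  let g' : UFam A U := ⟨g, r, hg⟩
  refine ⟨g', hg, ?_⟩
  have h0 : ‖f - g'‖ ≤ 0 := by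
    have h1 : Tendsto (fun i => |‖f.1 i‖ - r|) U (𝓝 |r - r|) :=
      ((UFam.tendsto_norm f).sub_const r).abs
    rw [sub_self, abs_zero] at h1
    exact le_of_tendsto_of_tendsto' (UFam.tendsto_norm (f - g')) h1 hfg
  have h1 : (SeparationQuotient.mk (f - g') : UProd U A) = 0 := by
    rw [← norm_eq_zero]
    exact le_antisymm h0 (norm_nonneg _)
  rw [SeparationQuotient.mk_sub, sub_eq_zero] at h1
  exact h1.symm

instance : Star (UProd U A) where
  star := SeparationQuotient.lift (fun f => SeparationQuotient.mk (star f)) fun _ _ h =>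
    SeparationQuotient.mk_eq_mk.2 (h.map UFam.continuous_star')

theorem star_mk (f : UFam A U) :
    star (SeparationQuotient.mk f : UProd U A) = SeparationQuotient.mk (star f) := rfl

instance : StarRing (UProd U A) where
  star_involutive x := by
    obtain ⟨f, rfl⟩ := SeparationQuotient.surjective_mk x
    rw [star_mk, star_mk, star_star]
  star_mul x y := by
    obtain ⟨f, rfl⟩ := SeparationQuotient.surjective_mk x
    obtain ⟨g, rfl⟩ := SeparationQuotient.surjective_mk y
    rw [← SeparationQuotient.mk_mul, star_mk, star_mk, star_mk, star_mul,
      SeparationQuotient.mk_mul]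
  star_add x y := by
    obtain ⟨f, rfl⟩ := SeparationQuotient.surjective_mk x
    obtain ⟨g, rfl⟩ := SeparationQuotient.surjective_mk y
    rw [← SeparationQuotient.mk_add, star_mk, star_mk, star_mk, star_add,
      SeparationQuotient.mk_add]

instance : StarModule ℂ (UProd U A) where
  star_smul c x := by
    obtain ⟨f, rfl⟩ := SeparationQuotient.surjective_mk x
    rw [← SeparationQuotient.mk_smul, star_mk, star_mk, star_smul, SeparationQuotient.mk_smul]

instance : CStarRing (UProd U A) where
  norm_mul_self_le x := by
    obtain ⟨f, rfl⟩ := SeparationQuotient.surjective_mk x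
    rw [star_mk, ← SeparationQuotient.mk_mul, SeparationQuotient.norm_mk,
      SeparationQuotient.norm_mk]
    refine (tendsto_nhds_unique ((UFam.tendsto_norm f).mul (UFam.tendsto_norm f)) ?_).le
    exact (UFam.tendsto_norm (star f * f)).congr fun i => CStarRing.norm_star_mul_self (x := f.1 i)

/-- The differences of a rapidly converging sequence lift to families with geometrically decreasing
norms, which are summed entrywise. -/
instance : CompleteSpace (UProd U A) := by
  refine Metric.complete_of_convergent_controlled_sequences (fun n => (1 / 2 : ℝ) ^ n)
    (fun n => by positivity) fun u hu => ?_
  obtain ⟨f0, -, hf0⟩ := exists_lift (u 0)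
  have hd : ∀ n, ∃ f : UFam A U, (∀ i, ‖f.1 i‖ ≤ (1 / 2 : ℝ) ^ n) ∧
      SeparationQuotient.mk f = u (n + 1) - u n := fun n => by
    obtain ⟨f, hf, hfu⟩ := exists_lift (u (n + 1) - u n)
    refine ⟨f, fun i => (hf i).trans ?_, hfu⟩
    rw [← dist_eq_norm]
    exact (hu n (n + 1) n (Nat.le_succ n) le_rfl).le
  choose f hf hfu using hd
  have hsum : ∀ i, Summable fun n => (f n).1 i := fun i =>
    Summable.of_norm_bounded (summable_geometric_two) fun n => hf n i
  have htail : ∀ N i, ‖∑' n, (f (n + N)).1 i‖ ≤ 2 * (1 / 2 : ℝ) ^ N := fun N i => by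
    refine tsum_of_norm_bounded (g := fun n => (1 / 2 : ℝ) ^ n * (1 / 2 : ℝ) ^ N) ?_ fun n => ?_
    · exact hasSum_geometric_two.mul_right _
    · rw [← pow_add]
      exact hf (n + N) i
  obtain ⟨M, hM⟩ := f0.2
  let g : UFam A U := ⟨fun i => f0.1 i + ∑' n, (f n).1 i, M + 2, fun i =>
    (norm_add_le _ _).trans (add_le_add (hM i) (by simpa using htail 0 i))⟩
  have hu' : ∀ N, u N = SeparationQuotient.mk (f0 + ∑ n ∈ Finset.range N, f n) := fun N => by
    induction N with
    | zero => simp [hf0]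
    | succ N ih =>
      rw [Finset.sum_range_succ, ← add_assoc, SeparationQuotient.mk_add, ← ih, hfu]
      abel
  refine ⟨SeparationQuotient.mk g, ?_⟩
  rw [tendsto_iff_norm_sub_tendsto_zero]
  have h0 : Tendsto (fun N : ℕ => 2 * (1 / 2 : ℝ) ^ N) atTop (𝓝 0) := by
    simpa using (tendsto_pow_atTop_nhds_zero_of_lt_one (r := (1 / 2 : ℝ)) (by norm_num)
      (by norm_num)).const_mul 2
  refine squeeze_zero (fun N => norm_nonneg _) (fun N => ?_) h0
  rw [norm_sub_rev, hu' N, ← SeparationQuotient.mk_sub, SeparationQuotient.norm_mk]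
  refine UFam.norm_le fun i => ?_
  have h1 : (∑ n ∈ Finset.range N, f n).1 i = ∑ n ∈ Finset.range N, (f n).1 i := by
    have := map_sum (boundedFamilies A).subtype (fun n => (f n : boundedFamilies A))
      (Finset.range N)
    exact (congrFun this i).trans (Finset.sum_apply _ _ _)
  have h2 : (g - (f0 + ∑ n ∈ Finset.range N, f n)).1 i = ∑' n, (f (n + N)).1 i := by
    change (f0.1 i + ∑' n, (f n).1 i) - (f0.1 i + (∑ n ∈ Finset.range N, f n).1 i) = _
    rw [h1, ← (hsum i).sum_add_tsum_nat_add N]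
    abel
  rw [h2]
  exact htail N i

instance : CStarAlgebra (UProd U A) where

open Classical in
/-- The quotient map, with the junk value `0` on unbounded families. -/
def proj (f : ∀ i, A i) : UProd U A :=
  if h : Bdd f then SeparationQuotient.mk (UFam.of U f h) else 0

theorem proj_eq {f : ∀ i, A i} (h : Bdd f) :
    proj (U := U) f = SeparationQuotient.mk (UFam.of U f h) := dif_pos h

theorem isCStarUltraproduct : IsCStarUltraproduct U A (UProd U A) (proj (U := U)) where
  map_one := (proj_eq (boundedFamilies A).one_mem).trans SeparationQuotient.mk_one
  map_add f g hf hg := by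
    rw [proj_eq ((boundedFamilies A).add_mem hf hg), proj_eq hf, proj_eq hg]; rfl
  map_mul f g hf hg := by
    rw [proj_eq ((boundedFamilies A).mul_mem hf hg), proj_eq hf, proj_eq hg]; rfl
  map_star f hf := by
    rw [proj_eq ((boundedFamilies A).star_mem' hf), proj_eq hf]; rfl
  map_smul c f hf := by
    rw [proj_eq ((boundedFamilies A).smul_mem hf c), proj_eq hf]; rfl
  norm_eq f hf := by
    rw [proj_eq hf]
    exact UFam.tendsto_norm (UFam.of U f hf)
  surj x := by
    obtain ⟨f, hf, rfl⟩ := exists_lift x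
    exact ⟨f.1, hf, proj_eq f.2⟩

end UProd

end Ultraproduct

/-! ### Realized functions commute with ultraproducts and isomorphisms -/

/-- A uniform limit of interpretations of formulas inherits Łoś's theorem. -/
theorem tendsto_of_realized {T : CStarTheory} {n : ℕ}
    {P : (A : Type) → [CStarAlgebra A] → (Fin n → A) → ℝ}
    (h : ∀ ε : ℝ, 0 < ε → ∃ phi : Formula n, ∀ (A : Type) [CStarAlgebra A], Models A T →
      ∀ a : Fin n → A, (∀ k, ‖a k‖ ≤ 1) → |P A a - phi.interp A a| ≤ ε)
    {I : Type} {U : Ultrafilter I} {A : I → Type} [∀ i, CStarAlgebra (A i)]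
    (hA : ∀ i, Models (A i) T) {B : Type} [CStarAlgebra B] {π : (∀ i, A i) → B}
    (hπ : IsCStarUltraproduct U A B π) (f : Fin n → (∀ i, A i)) (hf : ∀ k i, ‖f k i‖ ≤ 1) :
    Tendsto (fun i => P (A i) (fun k => f k i)) (U : Filter I) (𝓝 (P B fun k => π (f k))) := by
  rw [Metric.tendsto_nhds]
  intro ε hε
  obtain ⟨φ, hφ⟩ := h (ε / 4) (by positivity)
  have h1 := Metric.tendsto_nhds.1 (hπ.los φ f hf) (ε / 4) (by positivity)
  have h2 := hφ B (hπ.models hA) (fun k => π (f k)) fun k => hπ.norm_le_one (hf k)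
  filter_upwards [h1] with i hi
  have h3 := hφ (A i) (hA i) (fun k => f k i) fun k => hf k i
  rw [Real.dist_eq] at hi ⊢
  rw [abs_lt] at hi ⊢
  rw [abs_le] at h2 h3
  constructor <;> linarith

/-- An isomorphism exhibits its target as an ultrapower of its source, so invariance under
isomorphism is a special case of commutation with ultraproducts. -/
theorem eq_of_starAlgEquiv {T : CStarTheory} {n : ℕ}
    {P : (A : Type) → [CStarAlgebra A] → (Fin n → A) → ℝ}
    (h : ∀ (I : Type) (U : Ultrafilter I) (A : I → Type) [∀ i, CStarAlgebra (A i)],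
        (∀ i, Models (A i) T) →
        ∀ (B : Type) [CStarAlgebra B] (π : (∀ i, A i) → B),
          IsCStarUltraproduct U A B π →
          ∀ f : Fin n → (∀ i, A i), (∀ k i, ‖f k i‖ ≤ 1) →
            Tendsto (fun i => P (A i) (fun k => f k i)) (U : Filter I)
              (𝓝 (P B fun k => π (f k))))
    {A B : Type} [CStarAlgebra A] [CStarAlgebra B] (hA : Models A T)
    (Φ : A ≃⋆ₐ[ℂ] B) (a : Fin n → A) (ha : ∀ k, ‖a k‖ ≤ 1) :
    P B (fun k => Φ (a k)) = P A a :=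
  tendsto_nhds_unique
    (h Unit (pure ()) (fun _ => A) (fun _ => hA) B _ (isCStarUltraproduct_of_starAlgEquiv Φ)
      (fun k _ => a k) fun k _ => ha k) tendsto_const_nhds

/-! ### Independent families of functions and guessing -/

section Independent

open Cardinal

variable (Y : Type)

/-- The index set of the independent family attached to `Y`. -/
abbrev Lam : Type := (Y × Y → (Y → Prop)) × (Y → (Y × Y → Prop) × Y)

/-- The set indexing the independent family attached to `Y`; it has `2 ^ 2 ^ #Y` elements. -/
abbrev Fam : Type := Set (Y → Prop)

variable {Y}

open Classical in
/-- The independent family: `indep S (u, h)` is the second entry of any `h k` whose first entry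
is the trace of `S` along `u`; its value is arbitrary if there is no such `k`. -/
def indep [Nonempty Y] (S : Fam Y) (ξ : Lam Y) : Y :=
  if h : ∃ k, (ξ.2 k).1 = fun p => ξ.1 p ∈ S then (ξ.2 h.choose).2 else Classical.arbitrary Y

/-- Any `#Y` many members of the family can be given prescribed values simultaneously. -/
theorem indep_spec [Nonempty Y] (W : Set (Fam Y)) (hW : #W ≤ #Y) (y : Fam Y → Y) :
    ∃ ξ, ∀ S ∈ W, indep S ξ = y S := by
  classical
  rcases W.eq_empty_or_nonempty with rfl | hne
  · exact ⟨⟨fun _ _ => True, fun _ => ⟨fun _ => True, Classical.arbitrary Y⟩⟩, by simp⟩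
  have : Nonempty W := hne.to_subtype
  obtain ⟨σ, hσ⟩ : ∃ σ : Y → W, Surjective σ := by
    obtain ⟨e⟩ := hW
    exact ⟨invFun e, invFun_surjective e.injective⟩
  -- `u (k, l)` is a point separating the sets `σ k` and `σ l`, if these differ
  have hu : ∀ p : Y × Y, ∃ t : Y → Prop, (σ p.1).1 ≠ (σ p.2).1 →
      ¬ (t ∈ (σ p.1).1 ↔ t ∈ (σ p.2).1) := by
    intro p
    by_cases h : (σ p.1).1 = (σ p.2).1
    · exact ⟨fun _ => True, fun h' => (h' h).elim⟩
    · by_contra! hc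
      exact h (Set.ext fun t => (hc t).2)
  choose u hu using hu
  refine ⟨(u, fun k => (fun p => u p ∈ (σ k).1, y (σ k).1)), fun S hS => ?_⟩
  obtain ⟨k, hk⟩ := hσ ⟨S, hS⟩
  have hex : ∃ k, (((u, fun k => (fun p => u p ∈ (σ k).1, y (σ k).1)) : Lam Y).2 k).1 =
      fun p => u p ∈ S := ⟨k, by simp [hk]⟩
  rw [indep, dif_pos hex]
  have h := hex.choose_spec
  set l := hex.choose
  have hl : (σ l).1 = S := by
    by_contra hne
    have h1 := hu (l, k) (by simpa [hk] using hne)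
    refine h1 ?_
    have := congrFun h (l, k)
    simp only [hk] at this ⊢
    exact iff_of_eq this
  simp [hl]

variable (Y) in
theorem mk_Lam_le [Infinite Y] : #(Lam Y) ≤ 2 ^ #Y := by
  have h1 : ℵ₀ ≤ #Y := aleph0_le_mk Y
  have h2 : #Y < 2 ^ #Y := cantor _
  have hYY : #Y * #Y = #Y := mul_eq_self h1
  simp only [Lam, mk_prod, mk_pi, mk_Prop, lift_id, prod_const, hYY]
  rw [← power_mul, hYY, mul_power, ← power_mul, hYY]
  rw [show #Y ^ #Y = 2 ^ #Y from power_self_eq h1]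
  rw [mul_eq_self (h1.trans h2.le), mul_eq_self (h1.trans h2.le)]

variable (Y) in
theorem mk_Lam_lt_mk_Fam [Infinite Y] : #(Lam Y) < #(Fam Y) := by
  refine (mk_Lam_le Y).trans_lt ?_
  have : #(Fam Y) = 2 ^ (2 ^ #Y : Cardinal.{0}) := by
    simp [Fam, mk_set]
  rw [this]
  exact cantor _

variable (Y) in
theorem mk_Lam_arrow_le [Infinite Y] {Z : Type} (hZ : #Z ≤ #Y) : #(Lam Y → Z) ≤ #(Fam Y) := by
  have h1 : ℵ₀ ≤ #Y := aleph0_le_mk Y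
  have h2 : #Y < 2 ^ #Y := cantor _
  have h3 := mk_Lam_le Y
  have : #(Fam Y) = 2 ^ (2 ^ #Y : Cardinal.{0}) := by
    simp [Fam, mk_set]
  rw [this, mk_arrow, lift_id, lift_id]
  have h4 : ℵ₀ ≤ 2 ^ #Y := h1.trans h2.le
  calc #Z ^ #(Lam Y) ≤ (2 ^ #Y) ^ (2 ^ #Y : Cardinal.{0}) := by
        refine (power_le_power_right (hZ.trans h2.le)).trans (power_le_power_left ?_ h3)
        exact (power_pos _ two_pos).ne'
    _ = 2 ^ (2 ^ #Y : Cardinal.{0}) := by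
        rw [← power_mul, mul_eq_right h4 h2.le (aleph0_pos.trans_le h1).ne']

variable (Y) in
theorem mk_le_mk_Lam [Nonempty Y] : #Y ≤ #(Lam Y) :=
  mk_le_of_injective (f := fun y : Y => ((fun _ _ => True, fun _ => (fun _ => True, y)) : Lam Y))
    fun y z h => by
      have := congrArg (fun ξ : Lam Y => (ξ.2 (Classical.arbitrary Y)).2) h
      simpa using this

end Independent

section Guess

open Cardinal

/-- Guessing lemma. If the event `e` is compatible with every prescription of at most `#Y` values
off `V`, then, off a slightly larger set, a member `f` of the family can moreover be made to guess
the value of a given function `g` correctly. Otherwise one could choose recursively, for each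
`γ : Y`, a counterexample `(W γ, f γ, y γ)`, the `W γ` being pairwise disjoint; prescribing
the values `y γ` on `W γ \ {f γ}` and the value `γ` at `f γ` for all `γ` simultaneously gives
a point `ξ`, at which the counterexample with index `g ξ` fails. -/
theorem guess {Y L Ω : Type} [Infinite Y] (F : Ω → L → Y) (e : Set L) (V : Set Ω)
    (hcon : ∀ W : Set Ω, #W ≤ #Y → Disjoint W V → ∀ y : Ω → Y, ∃ ξ ∈ e, ∀ S ∈ W, F S ξ = y S)
    (g : L → Y) :
    ∃ N : Set Ω, #N ≤ #Y ∧ ∀ W : Set Ω, #W ≤ #Y → Disjoint W (V ∪ N) → ∀ f ∈ W, ∀ y : Ω → Y,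
      ∃ ξ ∈ e, F f ξ = g ξ ∧ ∀ S ∈ W, S ≠ f → F S ξ = y S := by
  classical
  by_contra! hbad
  have hbad' : ∀ N : Set Ω, ∃ p : Set Ω × Option Ω × (Ω → Y), #p.1 ≤ #Y ∧ (#N ≤ #Y →
      Disjoint p.1 (V ∪ N) ∧ ∃ f ∈ p.1, p.2.1 = some f ∧ ∀ ξ ∈ e, F f ξ = g ξ →
        ∃ S ∈ p.1, S ≠ f ∧ F S ξ ≠ p.2.2 S) := by
    intro N
    by_cases hN : #N ≤ #Y
    · obtain ⟨W, hW, hd, f, hf, y, hy⟩ := hbad N hN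
      exact ⟨(W, some f, y), hW, fun _ => ⟨hd, f, hf, rfl, hy⟩⟩
    · exact ⟨(∅, none, fun _ => Classical.arbitrary Y), by simp, fun h => (hN h).elim⟩
  choose pick hpick hpick' using hbad'
  let r : Y → Y → Prop := WellOrderingRel
  have hwf : WellFounded r := IsWellFounded.wf
  let G : Y → Set Ω × Option Ω × (Ω → Y) := hwf.fix fun γ ih =>
    pick (⋃ δ : {δ // r δ γ}, (ih δ.1 δ.2).1)
  have hG : ∀ γ, G γ = pick (⋃ δ : {δ // r δ γ}, (G δ.1).1) := fun γ => hwf.fix_eq _ γ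
  have hcard : ∀ γ, #(G γ).1 ≤ #Y := fun γ => by rw [hG]; exact hpick _
  have hU : ∀ γ, #(⋃ δ : {δ // r δ γ}, (G δ.1).1 : Set Ω) ≤ #Y := fun γ =>
    (mk_iUnion_le_sum_mk).trans ((sum_le_mk_mul_iSup _).trans
      ((mul_le_mul' (mk_subtype_le _) (ciSup_le' fun δ => hcard _)).trans
        (mul_eq_self (aleph0_le_mk Y)).le))
  have hspec := fun γ => hpick' _ (hU γ)
  simp only [← hG] at hspec
  have hlt : ∀ γ δ, r δ γ → Disjoint (G γ).1 (G δ).1 := fun γ δ h =>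
    ((hspec γ).1.mono_right Set.subset_union_right).mono_right
      (Set.subset_iUnion (fun δ : {δ // r δ γ} => (G δ.1).1) ⟨δ, h⟩)
  have huniq : ∀ γ δ S, S ∈ (G γ).1 → S ∈ (G δ).1 → γ = δ := by
    intro γ δ S h1 h2
    rcases trichotomous_of r γ δ with h | h | h
    · exact (Set.disjoint_left.1 (hlt _ _ h) h2 h1).elim
    · exact h
    · exact (Set.disjoint_left.1 (hlt _ _ h) h1 h2).elim
  obtain ⟨ξ, hξ, hval⟩ := hcon (⋃ γ, (G γ).1)
    ((mk_iUnion_le_sum_mk).trans ((sum_le_mk_mul_iSup _).trans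
      ((mul_le_mul' le_rfl (ciSup_le' fun δ => hcard _)).trans
        (mul_eq_self (aleph0_le_mk Y)).le)))
    (Set.disjoint_iUnion_left.2 fun γ => (hspec γ).1.mono_right Set.subset_union_left)
    (fun S => if h : ∃ γ, S ∈ (G γ).1 then
      if (G h.choose).2.1 = some S then h.choose else (G h.choose).2.2 S
      else Classical.arbitrary Y)
  have hval' : ∀ γ, ∀ S ∈ (G γ).1, F S ξ = if (G γ).2.1 = some S then γ else (G γ).2.2 S := by
    intro γ S hS
    have h : ∃ γ, S ∈ (G γ).1 := ⟨γ, hS⟩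
    have h1 := hval S (Set.mem_iUnion.2 h)
    rw [dif_pos h, huniq _ _ S h.choose_spec hS] at h1
    exact h1
  obtain ⟨-, f, hf, hfe, hno⟩ := hspec (g ξ)
  obtain ⟨S, hS, hSf, hne⟩ := hno ξ hξ (by rw [hval' _ f hf, if_pos hfe])
  refine hne ?_
  rw [hval' _ S hS, if_neg]
  rw [hfe]
  exact fun h => hSf (Option.some.inj h).symm

end Guess

/-! ### Approximate back-and-forth -/

section Extension

/-- The closed unit ball. -/
abbrev Ball (A : Type) [CStarAlgebra A] : Type := {x : A // ‖x‖ ≤ 1}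

/-- Back-and-forth step: if the tuples `α` and `β` agree up to `1` on suitable finitely many
formulas, then any extension of `α` by an element of the ball is matched by an extension of
`β`, up to `1` on the given formulas. The formulas used on `α` and `β` say
that some extension takes values close to a prescribed point of a finite net. -/
theorem exists_extension {m k : ℕ} (φ : Fin k → Formula (m + 1)) :
    ∃ (k' : ℕ) (ψ : Fin k' → Formula m), ∀ (A B : Type) [CStarAlgebra A] [CStarAlgebra B]
      (α : Fin m → A) (β : Fin m → B), (∀ i, ‖α i‖ ≤ 1) → (∀ i, ‖β i‖ ≤ 1) →
      (∀ j, |(ψ j).interp A α - (ψ j).interp B β| ≤ 1) → ∀ a : Ball A, ∃ b : Ball B,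
        ∀ j, |(φ j).interp A (Fin.snoc α a.1) - (φ j).interp B (Fin.snoc β b.1)| ≤ 1 := by
  choose M hM using fun j => (φ j).exists_bound
  let M' : ℝ := ∑ j, |M j|
  have hM' : ∀ j, M j ≤ M' := fun j => (le_abs_self _).trans
    (Finset.single_le_sum (f := fun j => |M j|) (fun i _ => abs_nonneg _) (Finset.mem_univ j))
  have hM0 : 0 ≤ M' := Finset.sum_nonneg fun _ _ => abs_nonneg _
  obtain ⟨t, -, htf, ht⟩ := Metric.totallyBounded_iff.1
    (isCompact_closedBall (0 : Fin k → ℝ) M').totallyBounded (1 / 4) (by norm_num) |>.imp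
      fun t h => (⟨trivial, h.1, h.2⟩ : True ∧ _ ∧ _)
  have := htf.fintype
  let e := Fintype.equivFin t
  refine ⟨Fintype.card t, fun i => Formula.inf (Formula.comb (fun v => 8 * ‖v - (e.symm i).1‖)
    (by fun_prop) φ), ?_⟩
  intro A B _ _ α β hα hβ hψ a
  have hv : (fun j => (φ j).interp A (Fin.snoc α a.1)) ∈ Metric.closedBall (0 : Fin k → ℝ) M' := by
    rw [mem_closedBall_zero_iff, pi_norm_le_iff_of_nonneg hM0]
    exact fun j => (hM j A _ (norm_snoc_le hα a.2)).trans (hM' j)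
  obtain ⟨r, hr, hvr⟩ := Set.mem_iUnion₂.1 (ht hv)
  rw [Metric.mem_ball, dist_eq_norm] at hvr
  have h1 := hψ (e ⟨r, hr⟩)
  set Θ := Formula.inf (Formula.comb (fun v => 8 * ‖v - (e.symm (e ⟨r, hr⟩)).1‖)
    (by fun_prop) φ) with hΘ
  have hA : Θ.interp A α ≤ 2 := by
    rw [hΘ, Formula.interp]
    refine (ciInf_le (Formula.bddBelow _ hα) a).trans ?_
    simp only [Formula.interp, Equiv.symm_apply_apply]
    linarith
  have hB : Θ.interp B β < 4 := by linarith [(abs_le.1 h1).1]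
  rw [hΘ, Formula.interp] at hB
  obtain ⟨b, hb⟩ := exists_lt_of_ciInf_lt hB
  simp only [Formula.interp, Equiv.symm_apply_apply] at hb
  refine ⟨b, fun j => ?_⟩
  have h2 := norm_le_pi_norm ((fun j => (φ j).interp A (Fin.snoc α a.1)) - r) j
  have h3 := norm_le_pi_norm ((fun j => (φ j).interp B (Fin.snoc β b.1)) - r) j
  simp only [Pi.sub_apply, Real.norm_eq_abs] at h2 h3
  have h4 := abs_le.1 (h2.trans hvr.le)
  have h5 : |(φ j).interp B (Fin.snoc β b.1) - r j| ≤ 1 / 2 := by linarith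
  rw [abs_le] at h5 ⊢
  constructor <;> linarith [h4.1, h4.2, h5.1, h5.2]

end Extension

section Step

open Cardinal

variable {A B : Type} [CStarAlgebra A] [CStarAlgebra B] {Y L Ω : Type}

/-- The set of indices at which the two halves of the tuple `x` of pairs of families agree
up to `1` on the formulas `φ j`. -/
def agree {m k : ℕ} (x : Fin m → (L → Ball A) × (L → Ball B)) (φ : Fin k → Formula m) : Set L :=
  {ξ | ∀ j, |(φ j).interp A (fun i => ((x i).1 ξ).1) -
    (φ j).interp B (fun i => ((x i).2 ξ).1)| ≤ 1}

/-- The agreement events of the pairs in `R` are compatible with all prescriptions of at most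
`#Y` values of the independent family off `V`. -/
def Compat (F : Ω → L → Y) (R : Set ((L → Ball A) × (L → Ball B))) (V : Set Ω) : Prop :=
  ∀ (m : ℕ) (x : Fin m → (L → Ball A) × (L → Ball B)), (∀ i, x i ∈ R) →
    ∀ (k : ℕ) (φ : Fin k → Formula m), ∀ W : Set Ω, #W ≤ #Y → Disjoint W V → ∀ y : Ω → Y,
      ∃ ξ ∈ agree x φ, ∀ S ∈ W, F S ξ = y S

theorem Compat.swap {F : Ω → L → Y} {R : Set ((L → Ball A) × (L → Ball B))} {V : Set Ω}
    (h : Compat F R V) : Compat F (Prod.swap ⁻¹' R) V := by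
  intro m x hx k φ W hW hd y
  obtain ⟨ξ, hξ, hy⟩ := h m (fun i => (x i).swap) hx k φ W hW hd y
  exact ⟨ξ, fun j => by rw [abs_sub_comm]; exact hξ j, hy⟩

theorem mk_sigma_nat_le {X : ℕ → Type} {κ : Cardinal.{0}} (hκ : ℵ₀ ≤ κ) (h : ∀ n, #(X n) ≤ κ) :
    #(Σ n, X n) ≤ κ := by
  rw [mk_sigma]
  refine (sum_le_mk_mul_iSup _).trans ?_
  rw [mk_nat]
  exact (mul_le_mul' hκ (ciSup_le' h)).trans (mul_eq_self hκ).le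

theorem mk_fin_arrow_le {X : Type} {κ : Cardinal.{0}} (hκ : ℵ₀ ≤ κ) (h : #X ≤ κ) (n : ℕ) :
    #(Fin n → X) ≤ κ := by
  rw [mk_arrow, lift_id, lift_id, mk_fin]
  exact (power_le_power_right h).trans (power_nat_le hκ)

/-- One new family `a` in the ball of `A` can be matched by a family in the ball of `B`, at the
cost of using up few members of the independent family: the match `b` is read off from a single
member `f` that guesses correct matches for all conditions simultaneously. -/
theorem Compat.extend [Infinite Y] {F : Ω → L → Y} {R : Set ((L → Ball A) × (L → Ball B))}
    {V : Set Ω} (h : Compat F R V) (hform : ∀ m, #(Formula m) ≤ #Y) {pB : Y → Ball B}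
    (hpB : Surjective pB) (hR : #R < #Ω) (hY : #Y < #Ω) (hV : #V < #Ω) (a : L → Ball A) :
    ∃ (b : L → Ball B) (N : Set Ω), #N ≤ max #R #Y ∧ Compat F (insert (a, b) R) (V ∪ N) := by
  classical
  have hY0 : ℵ₀ ≤ #Y := aleph0_le_mk Y
  set κ := max #R #Y with hκ
  have hκ0 : ℵ₀ ≤ κ := hY0.trans (le_max_right _ _)
  let C : Type := Σ m : ℕ, Σ k : ℕ, (Fin m → R) × (Fin k → Formula (m + 1))
  have hC : #C ≤ κ := by
    refine mk_sigma_nat_le hκ0 fun m => mk_sigma_nat_le hκ0 fun k => ?_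
    rw [mk_prod, lift_id, lift_id]
    exact (mul_le_mul' (mk_fin_arrow_le hκ0 (le_max_left _ _) m)
      (mk_fin_arrow_le hκ0 ((hform _).trans (le_max_right _ _)) k)).trans (mul_eq_self hκ0).le
  have key : ∀ c : C, ∃ (g : L → Y) (N : Set Ω), #N ≤ #Y ∧
      ∀ W : Set Ω, #W ≤ #Y → Disjoint W (V ∪ N) → ∀ f ∈ W, ∀ y : Ω → Y,
      ∃ ξ, (∀ j, |(c.2.2.2 j).interp A (Fin.snoc (fun i => ((c.2.2.1 i).1.1 ξ).1) (a ξ).1) -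
        (c.2.2.2 j).interp B (Fin.snoc (fun i => ((c.2.2.1 i).1.2 ξ).1) (pB (g ξ)).1)| ≤ 1) ∧
        F f ξ = g ξ ∧ ∀ S ∈ W, S ≠ f → F S ξ = y S := by
    rintro ⟨m, k, x, φ⟩
    obtain ⟨k', ψ, hψ⟩ := exists_extension φ
    have hg : ∀ ξ, ∃ z : Y, ξ ∈ agree (fun i => (x i).1) ψ → ∀ j,
        |(φ j).interp A (Fin.snoc (fun i => ((x i).1.1 ξ).1) (a ξ).1) -
        (φ j).interp B (Fin.snoc (fun i => ((x i).1.2 ξ).1) (pB z).1)| ≤ 1 := by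
      intro ξ
      by_cases hξ : ξ ∈ agree (fun i => (x i).1) ψ
      · obtain ⟨b, hb⟩ := hψ A B _ _ (fun i => ((x i).1.1 ξ).2) (fun i => ((x i).1.2 ξ).2) hξ (a ξ)
        obtain ⟨z, rfl⟩ := hpB b
        exact ⟨z, fun _ => hb⟩
      · exact ⟨Classical.arbitrary Y, fun h => (hξ h).elim⟩
    choose g hg using hg
    obtain ⟨N, hN, hN'⟩ := guess F (agree (fun i => (x i).1) ψ) V
      (h m (fun i => (x i).1) (fun i => (x i).2) k' ψ) g
    refine ⟨g, N, hN, fun W hW hd f hf y => ?_⟩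
    obtain ⟨ξ, hξ, h1, h2⟩ := hN' W hW hd f hf y
    exact ⟨ξ, hg ξ hξ, h1, h2⟩
  choose g N hN key using key
  have hNU : #(⋃ c, N c : Set Ω) ≤ κ :=
    (mk_iUnion_le_sum_mk).trans ((sum_le_mk_mul_iSup _).trans
      ((mul_le_mul' hC (ciSup_le' fun c => (hN c).trans (le_max_right _ _))).trans
        (mul_eq_self hκ0).le))
  have hΩ : ℵ₀ ≤ #Ω := hY0.trans hY.le
  obtain ⟨f, hf⟩ : ∃ f, f ∉ V ∪ ⋃ c, N c := by
    by_contra! hall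
    have h1 : #Ω ≤ #(V ∪ ⋃ c, N c : Set Ω) := by
      rw [Set.eq_univ_of_forall hall, mk_univ]
    exact absurd (h1.trans (mk_union_le _ _)) (not_le.2
      (add_lt_of_lt hΩ hV (hNU.trans_lt (max_lt hR hY))))
  refine ⟨fun ξ => pB (F f ξ), insert f (⋃ c, N c), ?_, ?_⟩
  · exact (mk_insert_le).trans ((add_le_add hNU (one_le_aleph0.trans hκ0)).trans
      (add_eq_self hκ0).le)
  · intro m' x' hx' k φ W hW hd y
    -- separate the entries of `x'` lying in `R` from those equal to the new pair
    let e := Fintype.equivFin {i // x' i ∈ R}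
    let σ : Fin m' → Fin (Fintype.card {i // x' i ∈ R} + 1) := fun i =>
      if hi : x' i ∈ R then (e ⟨i, hi⟩).castSucc else Fin.last _
    let c : C := ⟨Fintype.card {i // x' i ∈ R}, k, fun i => ⟨x' (e.symm i).1, (e.symm i).2⟩,
      fun j => (φ j).rename σ⟩
    have hd' : Disjoint (insert f W) (V ∪ N c) := by
      rw [Set.disjoint_insert_left]
      refine ⟨fun hfm => hf (hfm.imp id fun h => Set.mem_iUnion.2 ⟨c, h⟩), hd.mono_right ?_⟩
      exact Set.union_subset_union_right _ ((Set.subset_iUnion N c).trans (Set.subset_insert _ _))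
    obtain ⟨ξ, h1, h2, h3⟩ := key c (insert f W) (mk_insert_le.trans
      ((add_le_add hW (one_le_aleph0.trans hY0)).trans (add_eq_self hY0).le)) hd' f
      (Set.mem_insert _ _) y
    have hfW : f ∉ W := fun hfW => Set.disjoint_left.1 hd hfW (Or.inr (Set.mem_insert _ _))
    refine ⟨ξ, fun j => ?_, fun S hS => h3 S (Or.inr hS) fun hSf => hfW (hSf ▸ hS)⟩
    have h4 := h1 j
    simp only [c, Formula.interp_rename] at h4
    convert h4 using 4
    · funext i
      by_cases hi : x' i ∈ R
      · simp [σ, hi]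
      · have : x' i = (a, fun ξ => pB (F f ξ)) := (hx' i).resolve_right hi
        have hσ : σ i = Fin.last _ := dif_neg hi
        rw [Function.comp_apply, hσ, Fin.snoc_last, this]
    · funext i
      by_cases hi : x' i ∈ R
      · simp [σ, hi]
      · have : x' i = (a, fun ξ => pB (F f ξ)) := (hx' i).resolve_right hi
        have hσ : σ i = Fin.last _ := dif_neg hi
        rw [Function.comp_apply, hσ, Fin.snoc_last, this]
        exact congrArg (fun z => (pB z).1) h2

end Step

section Total

open Cardinal

variable {A B : Type} [CStarAlgebra A] [CStarAlgebra B] {Y L Ω : Type}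

/-- `Compat.extend` in either direction. -/
theorem Compat.extend_sum [Infinite Y] {F : Ω → L → Y} {R : Set ((L → Ball A) × (L → Ball B))}
    {V : Set Ω} (h : Compat F R V) (hform : ∀ m, #(Formula m) ≤ #Y) {pA : Y → Ball A}
    (hpA : Surjective pA) {pB : Y → Ball B} (hpB : Surjective pB) (hR : #R < #Ω) (hY : #Y < #Ω)
    (hV : #V < #Ω) (t : (L → Ball A) ⊕ (L → Ball B)) :
    ∃ (p : (L → Ball A) × (L → Ball B)) (N : Set Ω), #N ≤ max #R #Y ∧
      Compat F (insert p R) (V ∪ N) ∧ (t = Sum.inl p.1 ∨ t = Sum.inr p.2) := by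
  rcases t with a | b
  · obtain ⟨b, N, hN, hc⟩ := h.extend hform hpB hR hY hV a
    exact ⟨(a, b), N, hN, hc, Or.inl rfl⟩
  · have hR' : #(Prod.swap ⁻¹' R : Set ((L → Ball B) × (L → Ball A))) = #R := by
      rw [← Set.image_swap_eq_preimage_swap, mk_image_eq Prod.swap_injective]
    obtain ⟨a, N, hN, hc⟩ := h.swap.extend hform hpA (hR'.trans_lt hR) hY hV b
    refine ⟨(a, b), N, hN.trans_eq (by rw [hR']), ?_, Or.inr rfl⟩
    refine cast (congrArg (fun R => Compat F R (V ∪ N)) ?_) hc.swap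
    ext ⟨x, y⟩
    simp [Prod.ext_iff, and_comm]

/-- A small compatible set of pairs extends to a compatible set of pairs in which every family in
either ball has a match. This is a recursion along a well-order of the set of all families, whose
proper initial segments are smaller than the independent family. -/
theorem Compat.exists_total [Infinite Y] {F : Ω → L → Y}
    {R₀ : Set ((L → Ball A) × (L → Ball B))}
    (h₀ : Compat F R₀ ∅) (hform : ∀ m, #(Formula m) ≤ #Y) {pA : Y → Ball A}
    (hpA : Surjective pA) {pB : Y → Ball B} (hpB : Surjective pB) (hR₀ : #R₀ ≤ #Y) (hY : #Y < #Ω)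
    (hA : #(L → Ball A) ≤ #Ω) (hB : #(L → Ball B) ≤ #Ω) :
    ∃ (R : Set ((L → Ball A) × (L → Ball B))) (V : Set Ω), R₀ ⊆ R ∧
      (∀ a, ∃ b, (a, b) ∈ R) ∧ (∀ b, ∃ a, (a, b) ∈ R) ∧ Compat F R V := by
  classical
  have hY0 : ℵ₀ ≤ #Y := aleph0_le_mk Y
  have hΩ : ℵ₀ ≤ #Ω := hY0.trans hY.le
  have hTask : #((L → Ball A) ⊕ (L → Ball B)) ≤ #Ω := by
    rw [mk_sum, lift_id, lift_id]
    exact (add_le_add hA hB).trans (add_eq_self hΩ).le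
  obtain ⟨_, _, hord⟩ := exists_ord_eq_type_lt ((L → Ball A) ⊕ (L → Ball B))
  have step : ∀ (t : (L → Ball A) ⊕ (L → Ball B)) (R : Set ((L → Ball A) × (L → Ball B)))
      (V : Set Ω), ∃ q : ((L → Ball A) × (L → Ball B)) × Set Ω, Compat F R V → #R < #Ω →
        #V < #Ω → #q.2 ≤ max #R #Y ∧ Compat F (insert q.1 R) (V ∪ q.2) ∧
          (t = Sum.inl q.1.1 ∨ t = Sum.inr q.1.2) := by
    intro t R V
    by_cases h : Compat F R V ∧ #R < #Ω ∧ #V < #Ω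
    · obtain ⟨p, N, hq⟩ := h.1.extend_sum hform hpA hpB h.2.1 hY h.2.2 t
      exact ⟨(p, N), fun _ _ _ => hq⟩
    · exact ⟨((fun _ => Classical.arbitrary _, fun _ => Classical.arbitrary _), ∅),
        fun h1 h2 h3 => (h ⟨h1, h2, h3⟩).elim⟩
  choose pick hpick using step
  obtain ⟨G, hG⟩ : ∃ G : ((L → Ball A) ⊕ (L → Ball B)) → ((L → Ball A) × (L → Ball B)) × Set Ω,
      ∀ t, G t = pick t (R₀ ∪ Set.range fun s : Set.Iio t => (G s.1).1)
        (⋃ s : Set.Iio t, (G s.1).2) :=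
    ⟨WellFoundedLT.fix fun t ih => pick t (R₀ ∪ Set.range fun s : Set.Iio t => (ih s.1 s.2).1)
      (⋃ s : Set.Iio t, (ih s.1 s.2).2), fun t => WellFoundedLT.fix_eq _ t⟩
  let RS : Set ((L → Ball A) ⊕ (L → Ball B)) → Set ((L → Ball A) × (L → Ball B)) := fun I =>
    R₀ ∪ Set.range fun s : I => (G s.1).1
  let VS : Set ((L → Ball A) ⊕ (L → Ball B)) → Set Ω := fun I => ⋃ s : I, (G s.1).2
  have hG' : ∀ t, G t = pick t (RS (Set.Iio t)) (VS (Set.Iio t)) := hG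
  -- compatibility concerns finitely many pairs at a time, hence passes to unions
  have hlim : ∀ I : Set ((L → Ball A) ⊕ (L → Ball B)), (∀ s ∈ I, Set.Iio s ⊆ I) →
      (∀ s ∈ I, Compat F (insert (G s).1 (RS (Set.Iio s))) (VS (Set.Iio s) ∪ (G s).2)) →
      Compat F (RS I) (VS I) := by
    intro I hI hC m x hx k φ W hW hd y
    by_cases hall : ∀ i, x i ∈ R₀
    · exact h₀ m x hall k φ W hW (Set.disjoint_empty W) y
    push Not at hall
    obtain ⟨i₀, hi₀⟩ := hall
    obtain ⟨s₀, hs₀⟩ := (hx i₀).resolve_left hi₀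
    have hs : ∀ i, ∃ s ∈ I, x i ∈ R₀ ∨ (G s).1 = x i := by
      intro i
      rcases hx i with h | ⟨s, hs⟩
      · exact ⟨s₀.1, s₀.2, Or.inl h⟩
      · exact ⟨s.1, s.2, Or.inr hs⟩
    choose s hsI hs using hs
    obtain ⟨j, -, hj⟩ := Finset.exists_max_image Finset.univ s ⟨i₀, Finset.mem_univ _⟩
    refine hC (s j) (hsI j) m x (fun i => ?_) k φ W hW (hd.mono_right ?_) y
    · rcases hs i with h | h
      · exact Or.inr (Or.inl h)
      · rcases (hj i (Finset.mem_univ _)).eq_or_lt with h' | h'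
        · exact Or.inl (by rw [← h, h'])
        · exact Or.inr (Or.inr ⟨⟨s i, h'⟩, h⟩)
    · refine Set.union_subset (Set.iUnion_subset fun r => ?_) ?_
      · exact Set.subset_iUnion (fun s : I => (G s.1).2) ⟨r.1, hI _ (hsI j) r.2⟩
      · exact Set.subset_iUnion (fun s : I => (G s.1).2) ⟨s j, hsI j⟩
  have hRS : ∀ t, #(RS (Set.Iio t)) ≤ max #(Set.Iio t) #Y := fun t =>
    (mk_union_le _ _).trans ((add_le_add (hR₀.trans (le_max_right _ _))
      (mk_range_le.trans (le_max_left _ _))).trans (add_eq_self (hY0.trans (le_max_right _ _))).le)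
  have hsmall : ∀ t : (L → Ball A) ⊕ (L → Ball B), max #(Set.Iio t) #Y < #Ω := fun t =>
    max_lt ((mk_Iio_lt t hord).trans_le hTask) hY
  have main : ∀ t, #(G t).2 ≤ max #(Set.Iio t) #Y ∧
      Compat F (insert (G t).1 (RS (Set.Iio t))) (VS (Set.Iio t) ∪ (G t).2) ∧
      (t = Sum.inl (G t).1.1 ∨ t = Sum.inr (G t).1.2) := by
    intro t
    induction t using WellFoundedLT.induction with
    | ind t ih =>
      have hV : #(VS (Set.Iio t)) ≤ max #(Set.Iio t) #Y := by
        have hb : ∀ s : Set.Iio t, #(G s.1).2 ≤ max #(Set.Iio t) #Y := fun s =>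
          (ih s.1 s.2).1.trans (max_le_max_right _
            (mk_le_mk_of_subset (Set.Iio_subset_Iio (le_of_lt s.2))))
        have h1 : ℵ₀ ≤ max #(Set.Iio t) #Y := hY0.trans (le_max_right _ _)
        have h2 : #(Set.Iio t) ≤ max #(Set.Iio t) #Y := le_max_left _ _
        generalize max #(Set.Iio t) #Y = μ at *
        calc #(VS (Set.Iio t)) ≤ #(Set.Iio t) * ⨆ s : Set.Iio t, #(G s.1).2 :=
              mk_iUnion_le_sum_mk.trans (sum_le_mk_mul_iSup _)
          _ ≤ μ * μ := mul_le_mul' h2 (ciSup_le' hb)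
          _ = μ := mul_eq_self h1
      have h := hpick t (RS (Set.Iio t)) (VS (Set.Iio t))
        (hlim _ (fun s hs => Set.Iio_subset_Iio (le_of_lt hs)) fun s hs => (ih s hs).2.1)
        ((hRS t).trans_lt (hsmall t)) (hV.trans_lt (hsmall t))
      rw [← hG'] at h
      exact ⟨h.1.trans (max_le (hRS t) (le_max_right _ _)), h.2⟩
  refine ⟨RS Set.univ, VS Set.univ, Set.subset_union_left, fun a => ?_, fun b => ?_,
    hlim _ (fun _ _ => Set.subset_univ _) fun s _ => (main s).2.1⟩
  · refine ⟨(G (Sum.inl a)).1.2, Or.inr ⟨⟨Sum.inl a, trivial⟩, ?_⟩⟩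
    have h := (main (Sum.inl a)).2.2.resolve_right (by simp)
    exact Prod.ext (Sum.inl.inj h).symm rfl
  · refine ⟨(G (Sum.inr b)).1.1, Or.inr ⟨⟨Sum.inr b, trivial⟩, ?_⟩⟩
    have h := (main (Sum.inr b)).2.2.resolve_left (by simp)
    exact Prod.ext rfl (Sum.inr.inj h).symm

end Total

/-! ### Elementarily equivalent tuples become isomorphic in ultrapowers -/

section KeislerShelah

open Cardinal

variable {A B : Type} [CStarAlgebra A] [CStarAlgebra B] {L : Type}

/-- Agreement events are directed downwards. -/
theorem exists_agree_subset_inter {R : Set ((L → Ball A) × (L → Ball B))} {m m' k k' : ℕ}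
    {x : Fin m → (L → Ball A) × (L → Ball B)} {x' : Fin m' → (L → Ball A) × (L → Ball B)}
    (hx : ∀ i, x i ∈ R) (hx' : ∀ i, x' i ∈ R) (φ : Fin k → Formula m) (φ' : Fin k' → Formula m') :
    ∃ (m'' k'' : ℕ) (x'' : Fin m'' → (L → Ball A) × (L → Ball B)) (φ'' : Fin k'' → Formula m''),
      (∀ i, x'' i ∈ R) ∧ agree x'' φ'' ⊆ agree x φ ∩ agree x' φ' := by
  refine ⟨m + m', k + k', Fin.append x x', Fin.append (fun j => (φ j).rename (Fin.castAdd m'))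
    (fun j => (φ' j).rename (Fin.natAdd m)), fun i => ?_, fun ξ hξ => ⟨fun j => ?_, fun j => ?_⟩⟩
  · refine Fin.addCases (fun i => ?_) (fun i => ?_) i
    · simpa using hx i
    · simpa using hx' i
  · have := hξ (Fin.castAdd k' j)
    simpa [Formula.interp_rename, Function.comp_def] using this
  · have := hξ (Fin.natAdd k j)
    simpa [Formula.interp_rename, Function.comp_def] using this

/-- If all agreement events over `R` occur, some ultrafilter contains all of them, and along it
the interpretations of every formula at the two halves of a tuple from `R` become equal. -/
theorem exists_ultrafilter_agree {R : Set ((L → Ball A) × (L → Ball B))}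
    (h : ∀ (m : ℕ) (x : Fin m → (L → Ball A) × (L → Ball B)), (∀ i, x i ∈ R) →
      ∀ (k : ℕ) (φ : Fin k → Formula m), (agree x φ).Nonempty) :
    ∃ D : Ultrafilter L, ∀ (m : ℕ) (x : Fin m → (L → Ball A) × (L → Ball B)), (∀ i, x i ∈ R) →
      ∀ φ : Formula m, φ.interp (UProd D fun _ => A) (fun i => UProd.proj fun ξ => ((x i).1 ξ).1) =
        φ.interp (UProd D fun _ => B) (fun i => UProd.proj fun ξ => ((x i).2 ξ).1) := by
  classical
  obtain ⟨D, hD⟩ := Ultrafilter.exists_ultrafilter_of_finite_inter_nonempty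
    {s | ∃ (m : ℕ) (x : Fin m → (L → Ball A) × (L → Ball B)) (_ : ∀ i, x i ∈ R)
      (k : ℕ) (φ : Fin k → Formula m), s = agree x φ} (by
    intro T hT
    have : ∃ (m k : ℕ) (x : Fin m → (L → Ball A) × (L → Ball B)) (φ : Fin k → Formula m),
        (∀ i, x i ∈ R) ∧ agree x φ ⊆ ⋂₀ (T : Set (Set L)) := by
      induction T using Finset.induction_on with
      | empty => exact ⟨0, 0, Fin.elim0, Fin.elim0, fun i => i.elim0, by simp⟩
      | insert s T _ ih =>
        rw [Finset.coe_insert, Set.insert_subset_iff] at hT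
        obtain ⟨⟨m, x, hx, k, φ, rfl⟩, hT⟩ := hT
        obtain ⟨m', k', x', φ', hx', hsub⟩ := ih hT
        obtain ⟨m'', k'', x'', φ'', hx'', hsub'⟩ := exists_agree_subset_inter hx hx' φ φ'
        refine ⟨m'', k'', x'', φ'', hx'', ?_⟩
        rw [Finset.coe_insert, Set.sInter_insert]
        exact hsub'.trans (Set.inter_subset_inter_right _ hsub)
    obtain ⟨m, k, x, φ, hx, hsub⟩ := this
    exact (h m x hx k φ).mono hsub)
  refine ⟨D, fun m x hx φ => ?_⟩
  have hA := UProd.isCStarUltraproduct (U := D) (A := fun _ => A) |>.los φ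
    (fun i ξ => ((x i).1 ξ).1) (fun i ξ => ((x i).1 ξ).2)
  have hB := UProd.isCStarUltraproduct (U := D) (A := fun _ => B) |>.los φ
    (fun i ξ => ((x i).2 ξ).1) (fun i ξ => ((x i).2 ξ).2)
  have hAB := (hA.sub hB).abs
  refine sub_eq_zero.1 (abs_nonpos_iff.1 (le_of_forall_pos_le_add fun ε hε => ?_))
  rw [zero_add]
  -- tolerance `1` for the formula `φ / ε` is tolerance `ε` for `φ`
  have hmem : agree x (fun _ : Fin 1 => Formula.comb (k := 1) (fun v => v 0 / ε) (by fun_prop)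
      fun _ => φ) ∈ D := hD ⟨m, x, hx, 1, _, rfl⟩
  refine le_of_tendsto hAB (Filter.mem_of_superset hmem fun ξ hξ => ?_)
  have h1 := hξ 0
  simp only [Formula.interp] at h1
  rw [← sub_div, abs_div, abs_of_pos hε, div_le_one hε] at h1
  exact h1

/-- A ball-total relation between two C*-algebras preserving the norms of all *-polynomials
is contained in the graph of a *-isomorphism: the pairs of values of *-polynomials form
a *-subalgebra of the product which projects bijectively onto both factors. -/
theorem exists_starAlgEquiv {C C' X : Type} [CStarAlgebra C] [CStarAlgebra C'] (u : X → C)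
    (v : X → C') (huv : ∀ (m : ℕ) (x : Fin m → X) (t : CTerm m),
      ‖t.eval fun i => u (x i)‖ = ‖t.eval fun i => v (x i)‖)
    (hu : ∀ c : C, ‖c‖ ≤ 1 → ∃ x, u x = c) (hv : ∀ c : C', ‖c‖ ≤ 1 → ∃ x, v x = c) :
    ∃ Φ : C ≃⋆ₐ[ℂ] C', ∀ x, Φ (u x) = v x := by
  let S : StarSubalgebra ℂ (C × C') :=
    { carrier := {p | ∃ (m : ℕ) (x : Fin m → X) (t : CTerm m),
        (t.eval fun i => u (x i)) = p.1 ∧ (t.eval fun i => v (x i)) = p.2}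
      mul_mem' := by
        rintro p q ⟨m, x, t, h1, h2⟩ ⟨m', x', t', h1', h2'⟩
        refine ⟨m + m', Fin.append x x', CTerm.mul (t.rename (Fin.castAdd m'))
          (t'.rename (Fin.natAdd m)), ?_, ?_⟩ <;>
        simp [CTerm.eval, CTerm.eval_rename, Function.comp_def, h1, h2, h1', h2']
      add_mem' := by
        rintro p q ⟨m, x, t, h1, h2⟩ ⟨m', x', t', h1', h2'⟩
        refine ⟨m + m', Fin.append x x', CTerm.add (t.rename (Fin.castAdd m'))
          (t'.rename (Fin.natAdd m)), ?_, ?_⟩ <;>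
        simp [CTerm.eval, CTerm.eval_rename, Function.comp_def, h1, h2, h1', h2']
      algebraMap_mem' := fun c => ⟨0, Fin.elim0, CTerm.smul c CTerm.one, by
        simp [CTerm.eval, Algebra.algebraMap_eq_smul_one], by
        simp [CTerm.eval, Algebra.algebraMap_eq_smul_one]⟩
      star_mem' := by
        rintro p ⟨m, x, t, h1, h2⟩
        exact ⟨m, x, CTerm.star t, by simp [CTerm.eval, h1], by simp [CTerm.eval, h2]⟩ }
  have hS : ∀ p ∈ S, ‖p.1‖ = ‖p.2‖ := by
    rintro p ⟨m, x, t, h1, h2⟩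
    rw [← h1, ← h2]
    exact huv m x t
  have hx : ∀ x, (u x, v x) ∈ S := fun x =>
    ⟨1, fun _ => x, CTerm.var 0, by simp [CTerm.eval], by simp [CTerm.eval]⟩
  -- every element is a multiple of an element of the unit ball
  have hball : ∀ {E : Type} [CStarAlgebra E] (c : E),
      ∃ (r : ℂ) (c' : E), ‖c'‖ ≤ 1 ∧ c = r • c' := by
    intro E _ c
    refine ⟨((‖c‖ + 1 : ℝ) : ℂ), ((‖c‖ + 1 : ℝ) : ℂ)⁻¹ • c, ?_, ?_⟩
    · rw [norm_smul, norm_inv, Complex.norm_real, Real.norm_of_nonneg (by positivity),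
        inv_mul_le_one₀ (by positivity)]
      linarith
    · rw [smul_inv_smul₀]
      exact Complex.ofReal_ne_zero.2 (by positivity)
  let f₁ : S →⋆ₐ[ℂ] C := (StarAlgHom.fst ℂ C C').comp S.subtype
  let f₂ : S →⋆ₐ[ℂ] C' := (StarAlgHom.snd ℂ C C').comp S.subtype
  have hf₁ : Bijective f₁ := by
    refine ⟨(injective_iff_map_eq_zero f₁).2 fun p hp => ?_, fun c => ?_⟩
    · have h1 : p.1.1 = 0 := hp
      have h2 := hS p.1 p.2
      rw [h1, norm_zero, eq_comm, norm_eq_zero] at h2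
      exact Subtype.ext (Prod.ext h1 h2)
    · obtain ⟨r, c', hc', rfl⟩ := hball c
      obtain ⟨x, rfl⟩ := hu c' hc'
      exact ⟨r • ⟨_, hx x⟩, rfl⟩
  have hf₂ : Bijective f₂ := by
    refine ⟨(injective_iff_map_eq_zero f₂).2 fun p hp => ?_, fun c => ?_⟩
    · have h1 : p.1.2 = 0 := hp
      have h2 := hS p.1 p.2
      rw [h1, norm_zero, norm_eq_zero] at h2
      exact Subtype.ext (Prod.ext h2 h1)
    · obtain ⟨r, c', hc', rfl⟩ := hball c
      obtain ⟨x, rfl⟩ := hv c' hc'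
      exact ⟨r • ⟨_, hx x⟩, rfl⟩
  let e₁ := StarAlgEquiv.ofBijective f₁ hf₁
  let e₂ := StarAlgEquiv.ofBijective f₂ hf₂
  refine ⟨e₁.symm.trans e₂, fun x => ?_⟩
  have h1 : e₁.symm (u x) = ⟨_, hx x⟩ := e₁.symm_apply_eq.2 rfl
  rw [StarAlgEquiv.trans_apply, h1]
  rfl

/-- The Keisler–Shelah theorem, without set-theoretic assumptions: tuples with the same type
become conjugate under an isomorphism of ultrapowers. -/
theorem exists_ultrapower_equiv {n : ℕ} {a : Fin n → A} {b : Fin n → B} (ha : ∀ k, ‖a k‖ ≤ 1)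
    (hb : ∀ k, ‖b k‖ ≤ 1) (hab : ∀ φ : Formula n, φ.interp A a = φ.interp B b) :
    ∃ (L : Type) (D : Ultrafilter L) (Φ : (UProd D fun _ => A) ≃⋆ₐ[ℂ] UProd D fun _ => B),
      ∀ k, Φ (UProd.proj fun _ => a k) = UProd.proj fun _ => b k := by
  let Y : Type := ℕ × Ball A × Ball B × Σ m, Formula m
  have : Nonempty (Σ m, Formula m) := ⟨⟨0, Formula.atom CTerm.one⟩⟩
  have : Infinite Y := inferInstanceAs (Infinite (ℕ × _))
  let pA : Y → Ball A := fun y => y.2.1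
  let pB : Y → Ball B := fun y => y.2.2.1
  have hpA : Surjective pA := fun c =>
    ⟨(0, c, Classical.arbitrary _, Classical.arbitrary _), rfl⟩
  have hpB : Surjective pB := fun c =>
    ⟨(0, Classical.arbitrary _, c, Classical.arbitrary _), rfl⟩
  have hform : ∀ m, #(Formula m) ≤ #Y := fun m =>
    mk_le_of_injective (f := fun φ =>
      ((0, Classical.arbitrary _, Classical.arbitrary _, ⟨m, φ⟩) : Y)) fun φ ψ h => by
        simpa [Y] using h
  have hY0 : ℵ₀ ≤ #Y := aleph0_le_mk Y
  have hY : #Y < #(Fam Y) := (mk_le_mk_Lam Y).trans_lt (mk_Lam_lt_mk_Fam Y)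
  let R₀ : Set ((Lam Y → Ball A) × (Lam Y → Ball B)) :=
    Set.range fun k => (fun _ => ⟨a k, ha k⟩, fun _ => ⟨b k, hb k⟩)
  have hR₀ : #R₀ ≤ #Y := mk_range_le.trans ((lt_aleph0_of_finite _).le.trans hY0)
  have h₀ : Compat indep R₀ ∅ := by
    intro m x hx k φ W hW _ y
    obtain ⟨ξ, hξ⟩ := indep_spec W hW y
    refine ⟨ξ, fun j => ?_, hξ⟩
    choose s hs using hx
    have h1 := hab ((φ j).rename s)
    rw [Formula.interp_rename, Formula.interp_rename] at h1
    have h2 : (fun i => ((x i).1 ξ).1) = a ∘ s := funext fun i => by rw [← hs i]; rfl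
    have h3 : (fun i => ((x i).2 ξ).1) = b ∘ s := funext fun i => by rw [← hs i]; rfl
    rw [h2, h3, h1, sub_self, abs_zero]
    exact zero_le_one
  obtain ⟨R, V, hR, hRA, hRB, hRC⟩ := h₀.exists_total hform hpA hpB hR₀ hY
    (mk_Lam_arrow_le Y (mk_le_of_surjective hpA)) (mk_Lam_arrow_le Y (mk_le_of_surjective hpB))
  obtain ⟨D, hD⟩ := exists_ultrafilter_agree (R := R) fun m x hx k φ => by
    obtain ⟨ξ, hξ, -⟩ := hRC m x hx k φ ∅ (by simp) (Set.empty_disjoint V)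
      fun _ => Classical.arbitrary Y
    exact ⟨ξ, hξ⟩
  have hsurj : ∀ {E : Type} [CStarAlgebra E] (c : UProd D fun _ => E), ‖c‖ ≤ 1 →
      ∃ f : Lam Y → Ball E, UProd.proj (fun ξ => (f ξ).1) = c := by
    intro E _ c hc
    obtain ⟨f, hf, rfl⟩ := (UProd.isCStarUltraproduct (U := D) (A := fun _ => E)).surj c
    exact ⟨fun ξ => ⟨f ξ, (hf ξ).trans hc⟩, rfl⟩
  obtain ⟨Φ, hΦ⟩ := exists_starAlgEquiv (C := UProd D fun _ => A) (C' := UProd D fun _ => B)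
    (X := R) (fun p => UProd.proj fun ξ => (p.1.1 ξ).1) (fun p => UProd.proj fun ξ => (p.1.2 ξ).1)
    (fun m x t => by
      have := hD m (fun i => (x i).1) (fun i => (x i).2) (Formula.atom t)
      simpa only [Formula.interp] using this)
    (fun c hc => by
      obtain ⟨f, hf⟩ := hsurj c hc
      obtain ⟨g, hg⟩ := hRA f
      exact ⟨⟨(f, g), hg⟩, hf⟩)
    (fun c hc => by
      obtain ⟨f, hf⟩ := hsurj c hc
      obtain ⟨g, hg⟩ := hRB f
      exact ⟨⟨(g, f), hg⟩, hf⟩)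
  exact ⟨Lam Y, D, Φ, fun k => hΦ ⟨_, hR ⟨k, rfl⟩⟩⟩

end KeislerShelah

/-! ### The space of types and Stone–Weierstrass -/

section Types

/-- A function commuting with isomorphisms and ultraproducts depends on the type of a tuple
only. -/
theorem eq_of_interp_eq {T : CStarTheory} {n : ℕ}
    {P : (A : Type) → [CStarAlgebra A] → (Fin n → A) → ℝ}
    (h₁ : ∀ (A B : Type) [CStarAlgebra A] [CStarAlgebra B], Models A T → Models B T →
        ∀ Φ : A ≃⋆ₐ[ℂ] B, ∀ a : Fin n → A, (∀ k, ‖a k‖ ≤ 1) → P B (fun k => Φ (a k)) = P A a)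
    (h₂ : ∀ (I : Type) (U : Ultrafilter I) (A : I → Type) [∀ i, CStarAlgebra (A i)],
        (∀ i, Models (A i) T) →
        ∀ (B : Type) [CStarAlgebra B] (π : (∀ i, A i) → B),
          IsCStarUltraproduct U A B π →
          ∀ f : Fin n → (∀ i, A i), (∀ k i, ‖f k i‖ ≤ 1) →
            Tendsto (fun i => P (A i) (fun k => f k i)) (U : Filter I)
              (𝓝 (P B fun k => π (f k))))
    {A B : Type} [CStarAlgebra A] [CStarAlgebra B] (hA : Models A T) (hB : Models B T)
    {a : Fin n → A} {b : Fin n → B} (ha : ∀ k, ‖a k‖ ≤ 1) (hb : ∀ k, ‖b k‖ ≤ 1)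
    (hab : ∀ φ : Formula n, φ.interp A a = φ.interp B b) : P A a = P B b := by
  obtain ⟨L, D, Φ, hΦ⟩ := exists_ultrapower_equiv ha hb hab
  have hUA := UProd.isCStarUltraproduct (U := D) (A := fun _ => A)
  have hUB := UProd.isCStarUltraproduct (U := D) (A := fun _ => B)
  have hPA := tendsto_nhds_unique tendsto_const_nhds
    (h₂ L D (fun _ => A) (fun _ => hA) _ _ hUA (fun k _ => a k) fun k _ => ha k)
  have hPB := tendsto_nhds_unique tendsto_const_nhds
    (h₂ L D (fun _ => B) (fun _ => hB) _ _ hUB (fun k _ => b k) fun k _ => hb k)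
  have h := h₁ _ _ (hUA.models fun _ => hA) (hUB.models fun _ => hB) Φ
    (fun k => UProd.proj fun _ => a k) fun k => hUA.norm_le_one fun _ => ha k
  simp only [hΦ] at h
  rw [hPA, hPB, h]

/-- The space of types of `n`-tuples in the unit ball of models of `T`, with the topology of
pointwise convergence on formulas. -/
def typeSpace (T : CStarTheory) (n : ℕ) : Set (Formula n → ℝ) :=
  {τ | ∃ (A : Type) (_ : CStarAlgebra A) (a : Fin n → A),
    Models A T ∧ (∀ k, ‖a k‖ ≤ 1) ∧ ∀ φ : Formula n, τ φ = φ.interp A a}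

/-- Commutation with isomorphisms and ultraproducts makes `P` a continuous function on the compact
space of types, hence a uniform limit of formulas. -/
theorem realized_of_commutes {T : CStarTheory} {n : ℕ}
    {P : (A : Type) → [CStarAlgebra A] → (Fin n → A) → ℝ}
    (h₁ : ∀ (A B : Type) [CStarAlgebra A] [CStarAlgebra B], Models A T → Models B T →
        ∀ Φ : A ≃⋆ₐ[ℂ] B, ∀ a : Fin n → A, (∀ k, ‖a k‖ ≤ 1) → P B (fun k => Φ (a k)) = P A a)
    (h₂ : ∀ (I : Type) (U : Ultrafilter I) (A : I → Type) [∀ i, CStarAlgebra (A i)],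
        (∀ i, Models (A i) T) →
        ∀ (B : Type) [CStarAlgebra B] (π : (∀ i, A i) → B),
          IsCStarUltraproduct U A B π →
          ∀ f : Fin n → (∀ i, A i), (∀ k i, ‖f k i‖ ≤ 1) →
            Tendsto (fun i => P (A i) (fun k => f k i)) (U : Filter I)
              (𝓝 (P B fun k => π (f k))))
    {ε : ℝ} (hε : 0 < ε) :
    ∃ phi : Formula n, ∀ (A : Type) [CStarAlgebra A], Models A T →
      ∀ a : Fin n → A, (∀ k, ‖a k‖ ≤ 1) → |P A a - phi.interp A a| ≤ ε := by
  classical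
  have hX : ∀ τ : typeSpace T n, ∃ (A : Type) (_ : CStarAlgebra A) (a : Fin n → A),
    Models A T ∧ (∀ k, ‖a k‖ ≤ 1) ∧ ∀ φ : Formula n, τ.1 φ = φ.interp A a := fun τ => τ.2
  choose A instA a hA ha hτ using hX
  let p : typeSpace T n → ℝ := fun τ => P (A τ) (a τ)
  -- the ultraproduct along `g` of the chosen realizations realizes the limit type
  have hlos : ∀ (g : Ultrafilter (typeSpace T n)) (φ : Formula n),
      Tendsto (fun τ : typeSpace T n => τ.1 φ) g
        (𝓝 (φ.interp (UProd g A) fun k => UProd.proj fun τ => a τ k)) := by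
    intro g φ
    have h := (UProd.isCStarUltraproduct (U := g) (A := A)).los φ (fun k τ => a τ k)
      fun k τ => ha τ k
    simpa only [hτ] using h
  have hmod : ∀ g : Ultrafilter (typeSpace T n), Models (UProd g A) T := fun g =>
    (UProd.isCStarUltraproduct (U := g) (A := A)).models hA
  have hball : ∀ (g : Ultrafilter (typeSpace T n)) (k : Fin n),
      ‖(UProd.proj fun τ => a τ k : UProd g A)‖ ≤ 1 := fun g k =>
    (UProd.isCStarUltraproduct (U := g) (A := A)).norm_le_one fun τ => ha τ k
  have : CompactSpace (typeSpace T n) := by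
    refine ⟨isCompact_iff_ultrafilter_le_nhds.2 fun g _ => ?_⟩
    let τ₀ : typeSpace T n := ⟨fun φ => φ.interp (UProd g A) fun k => UProd.proj fun τ => a τ k,
      UProd g A, inferInstance, _, hmod g, hball g, fun _ => rfl⟩
    have h : Tendsto (fun τ : typeSpace T n => τ) g (𝓝 τ₀) :=
      tendsto_subtype_rng.2 (tendsto_pi_nhds.2 fun φ => hlos g φ)
    exact ⟨τ₀, trivial, h⟩
  have hp : Continuous p := by
    refine continuous_iff_ultrafilter.2 fun τ₀ g hg => ?_
    have h := h₂ _ g A hA _ _ (UProd.isCStarUltraproduct (U := g) (A := A)) (fun k τ => a τ k)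
      fun k τ => ha τ k
    have h' : p τ₀ = P (UProd g A) fun k => UProd.proj fun τ => a τ k :=
      eq_of_interp_eq h₁ h₂ (hA τ₀) (hmod g) (ha τ₀) (hball g) fun φ => by
        rw [← hτ]
        refine tendsto_nhds_unique ?_ (hlos g φ)
        exact ((continuous_apply φ).comp continuous_subtype_val).continuousAt.tendsto.mono_left hg
    rw [h']
    exact h
  -- the functions on the space of types given by formulas
  let S : Subalgebra ℝ C(typeSpace T n, ℝ) :=
    { carrier := {g | ∃ φ : Formula n, ∀ τ, g τ = τ.1 φ}
      mul_mem' := by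
        rintro g g' ⟨φ, hφ⟩ ⟨φ', hφ'⟩
        refine ⟨Formula.comb (k := 2) (fun v => v 0 * v 1) (by fun_prop) ![φ, φ'], fun τ => ?_⟩
        simp [hτ, hφ, hφ', Formula.interp]
      add_mem' := by
        rintro g g' ⟨φ, hφ⟩ ⟨φ', hφ'⟩
        refine ⟨Formula.comb (k := 2) (fun v => v 0 + v 1) (by fun_prop) ![φ, φ'], fun τ => ?_⟩
        simp [hτ, hφ, hφ', Formula.interp]
      algebraMap_mem' := fun r => ⟨Formula.comb (k := 0) (fun _ => r) (by fun_prop) Fin.elim0,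
        fun τ => by simp [hτ, Formula.interp]⟩ }
  have hS : S.SeparatesPoints := by
    intro τ τ' hne
    obtain ⟨φ, hφ⟩ : ∃ φ, τ.1 φ ≠ τ'.1 φ := by
      by_contra! h
      exact hne (Subtype.ext (funext h))
    exact ⟨_, ⟨⟨fun τ => τ.1 φ, (continuous_apply φ).comp continuous_subtype_val⟩,
      ⟨φ, fun _ => rfl⟩, rfl⟩, hφ⟩
  obtain ⟨⟨g, φ, hφ⟩, hg⟩ :=
    ContinuousMap.exists_mem_subalgebra_near_continuous_of_separatesPoints S hS p hp ε hε
  refine ⟨φ, fun B _ hB b hb => ?_⟩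
  let τ : typeSpace T n := ⟨fun φ => φ.interp B b, B, inferInstance, b, hB, hb, fun _ => rfl⟩
  have h1 : p τ = P B b := eq_of_interp_eq h₁ h₂ (hA τ) hB (ha τ) hb fun φ => (hτ τ φ).symm
  have h2 := hg τ
  rw [h1] at h2
  rw [abs_sub_comm]
  have h3 : g τ = φ.interp B b := hφ τ
  rw [← h3]
  exact h2.le

end Types

/-- Let `T` be a theory of unital C*-algebras and `P` a `T`-function
(an assignment, to each model `A` of `T`, of a `[0,1]`-valued predicate on `n`-tuples
from the unit ball) which is uniformly continuous with a modulus independent of the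
model.  Then `P` is realized (it is the interpretation of a `T`-formula, i.e. a uniform
limit over models of `T` of interpretations of formulas) if and only if (1) `P` is
invariant under isomorphisms between models of `T`, and (2) `P` commutes with
ultraproducts: `P^{∏_U A_i} = lim_U P^{A_i}`. -/
theorem tFunction_realized_iff (T : CStarTheory) (n : ℕ)
    (P : (A : Type) → [inst : CStarAlgebra A] → (Fin n → A) → ℝ)
    (hrange : ∀ (A : Type) [CStarAlgebra A], Models A T →
      ∀ a : Fin n → A, (∀ k, ‖a k‖ ≤ 1) → P A a ∈ Set.Icc (0 : ℝ) 1)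
    (hunifcont : ∀ ε : ℝ, 0 < ε → ∃ δ : ℝ, 0 < δ ∧
      ∀ (A : Type) [CStarAlgebra A], Models A T →
        ∀ a b : Fin n → A, (∀ k, ‖a k‖ ≤ 1) → (∀ k, ‖b k‖ ≤ 1) →
          (∀ k, ‖a k - b k‖ ≤ δ) → |P A a - P A b| ≤ ε) :
    (∀ ε : ℝ, 0 < ε → ∃ phi : Formula n,
        ∀ (A : Type) [CStarAlgebra A], Models A T →
          ∀ a : Fin n → A, (∀ k, ‖a k‖ ≤ 1) → |P A a - phi.interp A a| ≤ ε)
    ↔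
    ((∀ (A B : Type) [CStarAlgebra A] [CStarAlgebra B], Models A T → Models B T →
        ∀ Φ : A ≃⋆ₐ[ℂ] B, ∀ a : Fin n → A, (∀ k, ‖a k‖ ≤ 1) →
          P B (fun k => Φ (a k)) = P A a) ∧
      (∀ (I : Type) (U : Ultrafilter I) (A : I → Type) [∀ i, CStarAlgebra (A i)],
        (∀ i, Models (A i) T) →
        ∀ (B : Type) [CStarAlgebra B] (π : (∀ i, A i) → B),
          IsCStarUltraproduct U A B π →
          ∀ f : Fin n → (∀ i, A i), (∀ k i, ‖f k i‖ ≤ 1) →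
            Tendsto (fun i => P (A i) (fun k => f k i)) (U : Filter I)
              (nhds (P B fun k => π (f k))))) := by
  constructor
  · intro h
    have h₂ : ∀ (I : Type) (U : Ultrafilter I) (A : I → Type) [∀ i, CStarAlgebra (A i)],
        (∀ i, Models (A i) T) →
        ∀ (B : Type) [CStarAlgebra B] (π : (∀ i, A i) → B),
          IsCStarUltraproduct U A B π →
          ∀ f : Fin n → (∀ i, A i), (∀ k i, ‖f k i‖ ≤ 1) →
            Tendsto (fun i => P (A i) (fun k => f k i)) (U : Filter I)
              (nhds (P B fun k => π (f k))) :=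
      fun I U A _ hA B _ π hπ f hf => tendsto_of_realized h hA hπ f hf
    exact ⟨fun A B _ _ hA _ Φ a ha => eq_of_starAlgEquiv h₂ hA Φ a ha, h₂⟩
  · rintro ⟨h₁, h₂⟩ ε hε
    exact realized_of_commutes h₁ h₂ hε

end
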